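/- arXiv:1807.09498 — 2 statements merged into one kernel-verified Lean document; each statement's English description precedes it below -/
import Mathlib

section
/- Let C be a convex body in ℝ², let p₁ ≠ p₂ be points with I = C_{p₁} ∩ C_{p₂} having nonempty interior, and let (u, v, l, σ₁, σ₂) be a splitting configuration for (C, p₁, p₂). Let p₁', p₂' ∈ ℝ² be points such that I' = C_{p₁'} ∩ C_{p₂'} has nonempty interior. If u lies in the interior of I' or v lies in the interior of I', then I and I' intersect plainly. -/
/-!
Write `I = C_{p₁} ∩ C_{p₂}`, `I' = C_{p₁'} ∩ C_{p₂'}`, and suppose `u ∈ I'°`; the case `v ∈ I'°`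
follows by exchanging `u` and `v` (`swap`).

*The strip.* That both sides of `l` are `I`-vanishing says that `[u, v]` is a longest chord of `I`
in its direction (`chord_le`).  Separating `v - u` from the open convex set `I° - I°` then gives
parallel supporting lines of `I` at `u` and at `v` (`exists_strip`).  In suitable affine coordinates
`u = (0, 0)`, `v = (1, 0)` and `I ⊆ {0 ≤ x ≤ 1}`.

*The arcs.* The part of `∂I` strictly above `l` lies in a single one of `σ₁`, `σ₂`, and likewise
below `l` (`Cfg.upper`).  So above `l` the set `I`, if it has a point there, coincides with one of
the translates `C_{pᵢ}` (`Cfg.capsub`), and that translate, which has `u` and `v` on its boundary,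
lies in the strip there.

*The key property.* Let `z ∈ ∂I`, with `z = v` if `z` lies on `l`, and let `L` be a translate of `C`
whose interior contains `u` and `z`.  Then `L°` contains all points of `I` lying beyond the line
`uz`, on the side away from `v` (`key_strict`, `Cfg.key_interior`).  Shifting `L` slightly gives the
version in which only `z ∈ L` is assumed and points of `L` are obtained (`Cfg.key_closed`).  Both
versions pass to `I'`, an intersection of two such translates.

*Conclusion.* A point `z` of `∂I ∩ I'` is joined to `u` inside `∂I ∩ I'` either by the segment `uz`
or by the arc of `∂I` beyond the line `uz` (`Pair.pre_left`).  For `∂I' ∩ I`, project radially from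
`u`.  If a ray between those of `y₁, y₂ ∈ ∂I' ∩ I` left `I` before leaving `I'`, it would meet `∂I`
in a point `z ∈ I'°`, and whichever of `y₁`, `y₂` lies beyond the line `uz` would be interior to
`I'`, which is absurd.  Hence the set of directions of `∂I' ∩ I` is an interval (`Pair.pre_right`).
-/

open EuclideanGeometry

noncomputable section

/-- The Euclidean plane `ℝ²`. -/
abbrev Pt := EuclideanSpace ℝ (Fin 2)

/-- The translate `Γ_p = p + Γ` of a set `Γ ⊆ ℝ²`. -/
def tr (p : Pt) (Γ : Set Pt) : Set Pt := (p + ·) '' Γ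
/-- A convex body in `ℝ²`: a compact convex set with nonempty interior. -/
def IsConvexBody (C : Set Pt) : Prop :=
  IsCompact C ∧ Convex ℝ C ∧ (interior C).Nonempty

/-- Two sets intersect plainly: `∂C ∩ D` and `∂D ∩ C` are both connected. -/
def PlainlyIntersect (C D : Set Pt) : Prop :=
  IsPreconnected (frontier C ∩ D) ∧ IsPreconnected (frontier D ∩ C)

/-- A line in `ℝ²`. -/
def IsLine (l : Set Pt) : Prop :=
  ∃ a d : Pt, d ≠ 0 ∧ l = {x | ∃ t : ℝ, x = a + t • d}

/-- `H` is a closed side of the line `l`. -/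
def IsSideOf (l H : Set Pt) : Prop :=
  ∃ (f : Pt →ₗ[ℝ] ℝ) (c : ℝ), f ≠ 0 ∧ l = {x | f x = c} ∧ H = {x | f x ≤ c}

/-- `H` is a `C`-vanishing side of the line `l`: the length `len_C` of the sections of `C` by the
lines parallel to `l` within `H` is non-increasing (as a function of the distance from `l`) on the
set of lines meeting `C`.  Here `len_C` of a line is the diameter of the corresponding section. -/
def VanishingSide (C l H : Set Pt) : Prop :=
  ∃ (f : Pt →ₗ[ℝ] ℝ) (c : ℝ), f ≠ 0 ∧ l = {x | f x = c} ∧ H = {x | f x ≤ c} ∧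
    ∀ s t : ℝ, 0 ≤ s → s ≤ t →
      (C ∩ {x | f x = c - s}).Nonempty → (C ∩ {x | f x = c - t}).Nonempty →
      Metric.diam (C ∩ {x | f x = c - t}) ≤ Metric.diam (C ∩ {x | f x = c - s})

/-- A splitting configuration `(u, v, l, σ₁, σ₂)` for `(C, p₁, p₂)`, where
`I = C_{p₁} ∩ C_{p₂}`:  `u ≠ v` are points of `∂I`, `l` is the line through `u` and `v`, both
closed sides of `l` are `I`-vanishing, `l` is not parallel to the line through `p₁, p₂`,
`I ∩ l = [u, v]`, and `∂I` is the union of two connected arcs `σ₁ ⊆ ∂C_{p₁}`, `σ₂ ⊆ ∂C_{p₂}`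
meeting exactly in `{u, v}`. -/
def SplittingConfig (C : Set Pt) (p₁ p₂ u v : Pt) (l σ₁ σ₂ : Set Pt) : Prop :=
  u ≠ v ∧
  u ∈ frontier (tr p₁ C ∩ tr p₂ C) ∧ v ∈ frontier (tr p₁ C ∩ tr p₂ C) ∧
  l = {x | ∃ t : ℝ, x = u + t • (v - u)} ∧
  (∀ H : Set Pt, IsSideOf l H → VanishingSide (tr p₁ C ∩ tr p₂ C) l H) ∧
  (¬ ∃ t : ℝ, p₂ - p₁ = t • (v - u)) ∧
  (tr p₁ C ∩ tr p₂ C) ∩ l = segment ℝ u v ∧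
  IsConnected σ₁ ∧ IsConnected σ₂ ∧
  frontier (tr p₁ C ∩ tr p₂ C) = σ₁ ∪ σ₂ ∧ σ₁ ∩ σ₂ = {u, v} ∧
  σ₁ ⊆ frontier (tr p₁ C) ∧ σ₂ ⊆ frontier (tr p₂ C)

/-! ### Convex combinations and translates -/

lemma comb2 {K : Set (ℝ × ℝ)} (hK : Convex ℝ K) {x y t : ℝ × ℝ} (hx : x ∈ interior K)
    (hy : y ∈ K) {a b : ℝ} (ha : 0 < a) (hb : 0 ≤ b)
    (h1 : (a + b) * t.1 = a * x.1 + b * y.1) (h2 : (a + b) * t.2 = a * x.2 + b * y.2) :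
    t ∈ interior K := by
  have hs : 0 < a + b := by positivity
  have h := hK.combo_interior_self_mem_interior hx hy (a := a / (a + b)) (b := b / (a + b))
    (by positivity) (by positivity) (by field_simp)
  have : t = (a / (a + b)) • x + (b / (a + b)) • y := by
    ext
    · simp only [Prod.fst_add, Prod.smul_fst, smul_eq_mul]
      field_simp
      linarith
    · simp only [Prod.snd_add, Prod.smul_snd, smul_eq_mul]
      field_simp
      linarith
  rwa [this]

lemma comb3 {K : Set (ℝ × ℝ)} (hK : Convex ℝ K) {x y y' t : ℝ × ℝ} (hx : x ∈ interior K)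
    (hy : y ∈ K) (hy' : y' ∈ K) {a b c : ℝ} (ha : 0 < a) (hb : 0 ≤ b) (hc : 0 ≤ c)
    (h1 : (a + b + c) * t.1 = a * x.1 + b * y.1 + c * y'.1)
    (h2 : (a + b + c) * t.2 = a * x.2 + b * y.2 + c * y'.2) :
    t ∈ interior K := by
  have hs : 0 < a + b := by positivity
  have h : (((a * x.1 + b * y.1) / (a + b), (a * x.2 + b * y.2) / (a + b)) : ℝ × ℝ) ∈ interior K :=
    comb2 hK hx hy ha hb (by simp only; field_simp) (by simp only; field_simp)
  refine comb2 hK h hy' hs hc ?_ ?_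
  · simp only; rw [h1]; field_simp
  · simp only; rw [h2]; field_simp

/-- The key property for one body `K` with boundary points `0`, `(1, 0)` and `z`, whose part above
the `x`-axis lies in the strip `0 ≤ x ≤ 1`: if `0` and `z` are interior to the translate `K - D`,
then so is every point `q` of `K` strictly to the left of the ray `0z`, which is the side away from
`(1, 0)`.  Depending on the position of `D`, either `q + D` is a convex combination of `D`,
`z + D`, `z`, `q` in which an interior point has positive weight, or such a combination exhibits
`0`, `(1, 0)` or `z` as an interior point of `K`, or `K` leaves the strip. -/
lemma key_strict {K : Set (ℝ × ℝ)} (hK : Convex ℝ K) (h0 : (0 : ℝ × ℝ) ∈ K)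
    (h0' : (0 : ℝ × ℝ) ∉ interior K) (hv : ((1, 0) : ℝ × ℝ) ∈ K)
    (hv' : ((1, 0) : ℝ × ℝ) ∉ interior K)
    (hstrip : ∀ q ∈ K, 0 < q.2 → 0 ≤ q.1 ∧ q.1 ≤ 1)
    {z q D : ℝ × ℝ} (hz : z ∈ K) (hz' : z ∉ interior K) (hz2 : 0 ≤ z.2)
    (hzv : z.2 = 0 → z.1 = 1) (hz1 : 0 ≤ z.1) (hz1' : z.1 ≤ 1)
    (hq : q ∈ K) (hq1 : 0 ≤ q.1) (hzq : 0 < z.1 * q.2 - z.2 * q.1)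
    (hD : D ∈ interior K) (hzD : z + D ∈ interior K) : q + D ∈ interior K := by
  have hz1 : 0 < z.1 := by
    rcases hz1.lt_or_eq with h | h
    · exact h
    · rw [← h] at hzq; nlinarith
  rcases lt_or_ge (z.1 * D.2 - z.2 * D.1) 0 with hc | hc
  · -- Cramer's rule gives `k D = A z - B q`, with all three coefficients `2 × 2` determinants
    obtain ⟨k, hk⟩ : ∃ k, k = z.1 * q.2 - z.2 * q.1 := ⟨_, rfl⟩
    obtain ⟨B, hB⟩ : ∃ B, B = -(z.1 * D.2 - z.2 * D.1) := ⟨_, rfl⟩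
    obtain ⟨A, hA⟩ : ∃ A, A = D.1 * q.2 - D.2 * q.1 := ⟨_, rfl⟩
    have e1 : k * D.1 = A * z.1 - B * q.1 := by rw [hk, hA, hB]; ring
    have e2 : k * D.2 = A * z.2 - B * q.2 := by rw [hk, hA, hB]; ring
    have hk0 : 0 < k := by rw [hk]; exact hzq
    have hB0 : 0 < B := by rw [hB]; linarith
    clear hk hB hA
    have hA0 : 0 ≤ A := by
      by_contra hneg
      push Not at hneg
      refine h0' (comb3 hK hD hq hz hk0 hB0.le (neg_pos.2 hneg).le ?_ ?_)
      · simp only [Prod.fst_zero]; linarith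
      · simp only [Prod.snd_zero]; linarith
    have hAB : A < B := by
      by_contra hneg
      push Not at hneg
      refine hz' (comb3 hK hzD hq h0 hk0 hB0.le (sub_nonneg.2 hneg) ?_ ?_)
      · simp only [Prod.fst_zero, Prod.fst_add]; linarith
      · simp only [Prod.snd_zero, Prod.snd_add]; linarith
    rcases le_or_gt A k with h | h
    · refine comb3 hK hD hz hq (sub_pos.2 hAB) hA0 (sub_nonneg.2 h) ?_ ?_
      · simp only [Prod.fst_add]; linarith
      · simp only [Prod.snd_add]; linarith
    · refine comb3 hK hD (interior_subset hzD) hz (sub_pos.2 hAB) (sub_pos.2 h).le hk0.le ?_ ?_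
      · simp only [Prod.fst_add]; linarith
      · simp only [Prod.snd_add]; linarith
  · -- `D` is not to the right of the line `0z`, which contradicts the hypotheses on `K`
    exfalso
    rcases lt_trichotomy D.2 0 with hD2 | hD2 | hD2
    · have hz2' : 0 < z.2 := by
        rcases hz2.lt_or_eq with h | h
        · exact h
        · rw [← h] at hc; nlinarith
      refine h0' (comb3 hK hD hz hv hz2' (neg_pos.2 hD2).le
        (c := z.1 * D.2 - z.2 * D.1) hc ?_ ?_)
      · simp only [Prod.fst_zero]; ring
      · simp only [Prod.snd_zero]; ring
    · rcases le_or_gt D.1 0 with hD1 | hD1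
      · refine h0' (comb2 hK hD hv one_pos (neg_nonneg.2 hD1) ?_ ?_)
        · simp only [Prod.fst_zero]; ring
        · simp only [Prod.snd_zero, hD2]; ring
      · have hz20 : z.2 = 0 := by rw [hD2] at hc; nlinarith
        have := hzv hz20
        refine hv' (comb2 hK hzD h0 one_pos hD1.le ?_ ?_)
        · simp only [Prod.fst_add, Prod.fst_zero, this]; ring
        · simp only [Prod.snd_add, Prod.snd_zero, hD2, hz20]; ring
    · have hD1 : 0 ≤ D.1 := (hstrip D (interior_subset hD) hD2).1
      rcases hz2.lt_or_eq with h | h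
      · have hrest : 0 ≤ D.2 + z.2 * D.1 - z.1 * D.2 := by nlinarith
        refine hz' (comb3 hK hzD hv h0 h hc hrest ?_ ?_)
        · simp only [Prod.fst_add, Prod.fst_zero]; ring
        · simp only [Prod.snd_add, Prod.snd_zero]; ring
      · have hz11 := hzv h.symm
        have h1 := (hstrip _ (interior_subset hzD) (by simp only [Prod.snd_add]; linarith)).2
        simp only [Prod.fst_add] at h1
        have hD10 : D.1 = 0 := by linarith
        -- `D` is an interior point of `K` on the boundary line of the strip
        have hnear : ∀ᶠ s : ℝ in nhds 0, D + s • ((-1, 0) : ℝ × ℝ) ∈ interior K := by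
          refine (Continuous.tendsto' (by fun_prop) 0 D (by simp)).eventually
            (isOpen_interior.mem_nhds hD)
        obtain ⟨s, hs, hs0⟩ := ((hnear.filter_mono nhdsWithin_le_nhds).and
          (self_mem_nhdsWithin (s := Set.Ioi (0 : ℝ)))).exists
        have := (hstrip _ (interior_subset hs) (by simpa using hD2)).1
        simp [hD10] at this
        exact absurd hs0 (by simpa using this)

lemma frontier_meets {S I : Set (ℝ × ℝ)} (hS : IsPreconnected S) {x y : ℝ × ℝ} (hx : x ∈ S)
    (hxI : x ∈ I) (hy : y ∈ S) (hyI : y ∉ I) : (S ∩ frontier I).Nonempty := by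
  by_contra h
  have hno : ∀ p ∈ S, p ∉ frontier I := fun p hp hf => h ⟨p, hp, hf⟩
  obtain ⟨p, -, hp1, hp2⟩ := hS (interior I) (closure I)ᶜ isOpen_interior
    isClosed_closure.isOpen_compl
    (fun p hp => by
      by_cases hc : p ∈ closure I
      · left
        by_contra hi
        exact hno p hp ⟨hc, hi⟩
      · exact Or.inr hc)
    ⟨x, hx, by
      by_contra hi
      exact hno x hx ⟨subset_closure hxI, hi⟩⟩
    ⟨y, hy, fun hc => hno y hy ⟨hc, fun hi => hyI (interior_subset hi)⟩⟩
  exact hp2 (subset_closure (interior_subset hp1))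

/-- A point strictly inside a segment with endpoints in `I` is interior to `I` as soon as `I` has
points strictly on both sides of the line carrying the segment: a supporting line there would have
to contain the segment. -/
lemma mem_interior_of_line {I : Set (ℝ × ℝ)} (hI : Convex ℝ I) (hne : (interior I).Nonempty)
    {r s p a b : ℝ × ℝ} (hr : r ∈ I) (hs : s ∈ I) (ha : a ∈ I) (hb : b ∈ I) {t : ℝ}
    (ht : 0 < t) (ht' : t < 1) (h1 : p.1 = r.1 + t * (s.1 - r.1)) (h2 : p.2 = r.2 + t * (s.2 - r.2))
    (hfa : (a.1 - r.1) * (s.2 - r.2) - (a.2 - r.2) * (s.1 - r.1) < 0)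
    (hfb : 0 < (b.1 - r.1) * (s.2 - r.2) - (b.2 - r.2) * (s.1 - r.1)) : p ∈ interior I := by
  by_contra hp
  obtain ⟨f, hf⟩ := geometric_hahn_banach_open_point hI.interior isOpen_interior hp
  have hle : ∀ q ∈ I, f q ≤ f p := by
    intro q hq
    have hq' : q ∈ closure (interior I) := by
      rw [hI.closure_interior_eq_closure_of_nonempty_interior hne]
      exact subset_closure hq
    exact closure_minimal (fun x hx => (hf x hx).le)
      (isClosed_le f.continuous continuous_const) hq'
  obtain ⟨α, hα⟩ : ∃ α, α = f (1, 0) := ⟨_, rfl⟩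
  -- `f` is constant along the segment and bounded by `f p` at `a` and at `b`, which lie on opposite
  -- sides, so both of its coefficients vanish
  obtain ⟨β, hβ⟩ : ∃ β, β = f (0, 1) := ⟨_, rfl⟩
  have hfx : ∀ x : ℝ × ℝ, f x = α * x.1 + β * x.2 := by
    intro x
    have : x = x.1 • ((1, 0) : ℝ × ℝ) + x.2 • ((0, 1) : ℝ × ℝ) := by ext <;> simp
    conv_lhs => rw [this]
    rw [map_add, map_smul, map_smul, hα, hβ]
    simp [mul_comm]
  have h3 := hle r hr
  have h4 := hle s hs
  have h5 := hle a ha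
  have h6 := hle b hb
  obtain ⟨c, hc⟩ := hne
  have h7 := hf c hc
  simp only [hfx, h1, h2] at h3 h4 h5 h6 h7
  have h8 : α * (s.1 - r.1) + β * (s.2 - r.2) = 0 := by nlinarith
  have ea : ∀ x : ℝ × ℝ, (s.2 - r.2) * (α * (x.1 - r.1) + β * (x.2 - r.2)) =
      α * ((x.1 - r.1) * (s.2 - r.2) - (x.2 - r.2) * (s.1 - r.1)) := by
    intro x; linear_combination (x.2 - r.2) * h8
  have eb : ∀ x : ℝ × ℝ, (s.1 - r.1) * (α * (x.1 - r.1) + β * (x.2 - r.2)) =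
      -(β * ((x.1 - r.1) * (s.2 - r.2) - (x.2 - r.2) * (s.1 - r.1))) := by
    intro x; linear_combination (x.1 - r.1) * h8
  have ha' : α * (a.1 - r.1) + β * (a.2 - r.2) ≤ 0 := by nlinarith
  have hb' : α * (b.1 - r.1) + β * (b.2 - r.2) ≤ 0 := by nlinarith
  have hab := mul_nonneg_of_nonpos_of_nonpos ha' hb'
  have hneg := mul_neg_of_neg_of_pos hfa hfb
  have ha0 : α = 0 := by
    by_contra hne
    have : 0 < α ^ 2 := by positivity
    have h9 : (s.2 - r.2) ^ 2 * ((α * (a.1 - r.1) + β * (a.2 - r.2)) *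
      (α * (b.1 - r.1) + β * (b.2 - r.2))) = α ^ 2 * (((a.1 - r.1) * (s.2 - r.2) -
      (a.2 - r.2) * (s.1 - r.1)) * ((b.1 - r.1) * (s.2 - r.2) - (b.2 - r.2) * (s.1 - r.1))) := by
      calc _ = ((s.2 - r.2) * (α * (a.1 - r.1) + β * (a.2 - r.2))) *
            ((s.2 - r.2) * (α * (b.1 - r.1) + β * (b.2 - r.2))) := by ring
        _ = _ := by rw [ea, ea]; ring
    have := mul_nonneg (sq_nonneg (s.2 - r.2)) hab
    have := mul_neg_of_pos_of_neg ‹0 < α ^ 2› hneg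
    linarith
  have hb0 : β = 0 := by
    by_contra hne
    have : 0 < β ^ 2 := by positivity
    have h9 : (s.1 - r.1) ^ 2 * ((α * (a.1 - r.1) + β * (a.2 - r.2)) *
      (α * (b.1 - r.1) + β * (b.2 - r.2))) = β ^ 2 * (((a.1 - r.1) * (s.2 - r.2) -
      (a.2 - r.2) * (s.1 - r.1)) * ((b.1 - r.1) * (s.2 - r.2) - (b.2 - r.2) * (s.1 - r.1))) := by
      calc _ = ((s.1 - r.1) * (α * (a.1 - r.1) + β * (a.2 - r.2))) *
            ((s.1 - r.1) * (α * (b.1 - r.1) + β * (b.2 - r.2))) := by ring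
        _ = _ := by rw [eb, eb]; ring
    have := mul_nonneg (sq_nonneg (s.1 - r.1)) hab
    have := mul_neg_of_pos_of_neg ‹0 < β ^ 2› hneg
    linarith
  rw [ha0, hb0] at h7
  linarith

/-! ### The two boundary arcs and the strip -/

/-- A splitting configuration in affine coordinates with `u = (0, 0)` and `v = (1, 0)`: `K₁`, `K₂`
stand for `C_{p₁}`, `C_{p₂}`, so that `I = K₁ ∩ K₂`, and `S₁`, `S₂` for the arcs `σ₁`, `σ₂`.  The
two vanishing sides enter only through their consequence `strip`.  That `K₁` and `K₂` are translates
of one another is not part of the structure; it is supplied through `IsTr`. -/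
structure Cfg (K₁ K₂ S₁ S₂ : Set (ℝ × ℝ)) : Prop where
  conv₁ : Convex ℝ K₁
  conv₂ : Convex ℝ K₂
  closed₁ : IsClosed K₁
  closed₂ : IsClosed K₂
  cpt : IsCompact (K₁ ∩ K₂)
  ne : (interior (K₁ ∩ K₂)).Nonempty
  strip : ∀ q ∈ K₁ ∩ K₂, 0 ≤ q.1 ∧ q.1 ≤ 1
  front : frontier (K₁ ∩ K₂) = S₁ ∪ S₂
  pre₁ : IsPreconnected S₁
  pre₂ : IsPreconnected S₂
  inter : S₁ ∩ S₂ = {(0 : ℝ × ℝ), ((1, 0) : ℝ × ℝ)}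
  sub₁ : S₁ ⊆ frontier K₁
  sub₂ : S₂ ⊆ frontier K₂

namespace Cfg
variable {K₁ K₂ S₁ S₂ : Set (ℝ × ℝ)}

lemma conv (h : Cfg K₁ K₂ S₁ S₂) : Convex ℝ (K₁ ∩ K₂) := h.conv₁.inter h.conv₂
lemma z₁ (h : Cfg K₁ K₂ S₁ S₂) : (0 : ℝ × ℝ) ∈ S₁ :=
  (h.inter.symm ▸ Set.mem_insert _ _ : (0 : ℝ × ℝ) ∈ S₁ ∩ S₂).1
lemma z₂ (h : Cfg K₁ K₂ S₁ S₂) : (0 : ℝ × ℝ) ∈ S₂ :=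
  (h.inter.symm ▸ Set.mem_insert _ _ : (0 : ℝ × ℝ) ∈ S₁ ∩ S₂).2
lemma v₁ (h : Cfg K₁ K₂ S₁ S₂) : ((1, 0) : ℝ × ℝ) ∈ S₁ :=
  (h.inter.symm ▸ Set.mem_insert_of_mem _ rfl : ((1, 0) : ℝ × ℝ) ∈ S₁ ∩ S₂).1
lemma v₂ (h : Cfg K₁ K₂ S₁ S₂) : ((1, 0) : ℝ × ℝ) ∈ S₂ :=
  (h.inter.symm ▸ Set.mem_insert_of_mem _ rfl : ((1, 0) : ℝ × ℝ) ∈ S₁ ∩ S₂).2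
lemma front_sub (h : Cfg K₁ K₂ S₁ S₂) : frontier (K₁ ∩ K₂) ⊆ K₁ ∩ K₂ :=
  (h.closed₁.inter h.closed₂).frontier_subset
lemma z_front (h : Cfg K₁ K₂ S₁ S₂) : (0 : ℝ × ℝ) ∈ frontier (K₁ ∩ K₂) :=
  h.front ▸ Or.inl h.z₁
lemma v_front (h : Cfg K₁ K₂ S₁ S₂) : ((1, 0) : ℝ × ℝ) ∈ frontier (K₁ ∩ K₂) :=
  h.front ▸ Or.inl h.v₁

/-- A frontier point of `I` on the line `x = 1/2` and not above the `x`-axis. -/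
lemma exists_below (h : Cfg K₁ K₂ S₁ S₂) :
    ∃ b ∈ frontier (K₁ ∩ K₂), b.1 = 1 / 2 ∧ b.2 ≤ 0 := by
  have hm : ((1 / 2, 0) : ℝ × ℝ) ∈ K₁ ∩ K₂ := by
    have := h.conv (h.front_sub h.z_front) (h.front_sub h.v_front)
      (a := 1 / 2) (b := 1 / 2) (by norm_num) (by norm_num) (by norm_num)
    simpa using this
  have hc : IsCompact ((K₁ ∩ K₂) ∩ {q | q.1 = 1 / 2}) :=
    h.cpt.inter_right (isClosed_eq continuous_fst continuous_const)
  obtain ⟨b, hb, hmin⟩ := hc.exists_isMinOn ⟨_, hm, rfl⟩ continuous_snd.continuousOn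
  refine ⟨b, ⟨subset_closure hb.1, fun hbi => ?_⟩, hb.2, hmin ⟨hm, rfl⟩⟩
  have hnear : ∀ᶠ s : ℝ in nhds 0, b + s • ((0, -1) : ℝ × ℝ) ∈ interior (K₁ ∩ K₂) :=
    (Continuous.tendsto' (by fun_prop) 0 b (by simp)).eventually (isOpen_interior.mem_nhds hbi)
  obtain ⟨s, hs, hs0⟩ := ((hnear.filter_mono nhdsWithin_le_nhds).and
    (self_mem_nhdsWithin (s := Set.Ioi (0 : ℝ)))).exists
  have := hmin ⟨interior_subset hs, by simpa using hb.2⟩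
  simp at this
  exact absurd hs0 (by simpa using this)

/-- The line through `a` and `b` separates `0` from `(1, 0)` and meets the frontier of `I` in `a`
and `b` only, so a connected part of the frontier joining `0` to `(1, 0)` and avoiding `a`
passes through `b`. -/
lemma mem_of_not_mem (h : Cfg K₁ K₂ S₁ S₂) {S : Set (ℝ × ℝ)} (hS : IsPreconnected S)
    (hsub : S ⊆ frontier (K₁ ∩ K₂)) (h0 : (0 : ℝ × ℝ) ∈ S) (hv : ((1, 0) : ℝ × ℝ) ∈ S)
    {a b : ℝ × ℝ} (ha : a ∈ frontier (K₁ ∩ K₂)) (ha2 : 0 < a.2) (haS : a ∉ S)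
    (hb : b ∈ frontier (K₁ ∩ K₂)) (hb1 : b.1 = 1 / 2) (hb2 : b.2 ≤ 0) : b ∈ S := by
  have has := h.strip a (h.front_sub ha)
  have hI0 := h.front_sub h.z_front
  have hIv := h.front_sub h.v_front
  have f0 : ((0 : ℝ × ℝ).1 - b.1) * (a.2 - b.2) - ((0 : ℝ × ℝ).2 - b.2) * (a.1 - b.1) < 0 := by
    simp only [Prod.fst_zero, Prod.snd_zero, hb1]; nlinarith
  have fv : 0 < (((1, 0) : ℝ × ℝ).1 - b.1) * (a.2 - b.2) -
      (((1, 0) : ℝ × ℝ).2 - b.2) * (a.1 - b.1) := by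
    simp only [hb1]; nlinarith
  obtain ⟨e, heS, he⟩ := hS.intermediate_value h0 hv
    (f := fun q : ℝ × ℝ => (q.1 - b.1) * (a.2 - b.2) - (q.2 - b.2) * (a.1 - b.1))
    (by fun_prop) ⟨f0.le, fv.le⟩
  simp only at he
  have heI := h.front_sub (hsub heS)
  have hab : 0 < a.2 - b.2 := by linarith
  obtain ⟨t, ht⟩ : ∃ t, t = (e.2 - b.2) / (a.2 - b.2) := ⟨_, rfl⟩
  have e2 : e.2 = b.2 + t * (a.2 - b.2) := by rw [ht]; field_simp; ring
  have e1 : e.1 = b.1 + t * (a.1 - b.1) := by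
    have : (e.1 - b.1) * (a.2 - b.2) = (t * (a.1 - b.1)) * (a.2 - b.2) := by
      rw [e2] at he; linarith
    have := mul_right_cancel₀ hab.ne' this
    linarith
  rcases lt_trichotomy t 0 with h1 | h1 | h1
  · exfalso
    have hd : 0 < 1 - t := by linarith
    refine hb.2 (mem_interior_of_line h.conv h.ne heI (h.front_sub ha) hI0 hIv
      (t := -t / (1 - t)) (div_pos (by linarith) hd) ((div_lt_one hd).2 (by linarith)) ?_ ?_ ?_ ?_)
    · rw [e1]; field_simp; ring
    · rw [e2]; field_simp; ring
    · have := mul_neg_of_pos_of_neg hd f0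
      rw [e1, e2]; linarith
    · have := mul_pos hd fv
      rw [e1, e2]; linarith
  · have : e = b := by ext <;> simp [e1, e2, h1]
    rwa [← this]
  · exfalso
    rcases lt_trichotomy t 1 with h2 | h2 | h2
    · exact (hsub heS).2 (mem_interior_of_line h.conv h.ne (h.front_sub hb) (h.front_sub ha)
        hI0 hIv h1 h2 e1 e2 f0 fv)
    · exact haS (by have : e = a := by { ext <;> simp [e1, e2, h2] }
                    rwa [← this])
    · refine ha.2 (mem_interior_of_line h.conv h.ne (h.front_sub hb) heI hI0 hIv
        (t := 1 / t) (by positivity) ((div_lt_one h1).2 h2) ?_ ?_ ?_ ?_)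
      · rw [e1]; field_simp; ring
      · rw [e2]; field_simp; ring
      · have := mul_neg_of_pos_of_neg h1 f0
        rw [e1, e2]; linarith
      · have := mul_pos h1 fv
        rw [e1, e2]; linarith

/-- The part of `∂I` strictly above the `x`-axis lies in a single arc.  Otherwise each arc avoids some
point there, so by `mem_of_not_mem` both arcs contain the point of `exists_below`, which lies
neither at `0` nor at `(1, 0)`. -/
lemma upper (h : Cfg K₁ K₂ S₁ S₂) :
    (∀ a ∈ frontier (K₁ ∩ K₂), 0 < a.2 → a ∈ S₁) ∨
    (∀ a ∈ frontier (K₁ ∩ K₂), 0 < a.2 → a ∈ S₂) := by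
  by_contra hcon
  push Not at hcon
  obtain ⟨⟨a, ha, ha2, haS⟩, a', ha', ha2', haS'⟩ := hcon
  obtain ⟨b, hb, hb1, hb2⟩ := h.exists_below
  have m1 := h.mem_of_not_mem h.pre₁ (h.front ▸ Set.subset_union_left) h.z₁ h.v₁ ha ha2 haS hb hb1 hb2
  have m2 := h.mem_of_not_mem h.pre₂ (h.front ▸ Set.subset_union_right) h.z₂ h.v₂
    ha' ha2' haS' hb hb1 hb2
  have : b ∈ ({(0 : ℝ × ℝ), ((1, 0) : ℝ × ℝ)} : Set (ℝ × ℝ)) := h.inter ▸ ⟨m1, m2⟩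
  rcases this with h | h
  · rw [h] at hb1; norm_num at hb1
  · rw [Set.mem_singleton_iff] at h
    rw [h] at hb1; norm_num at hb1

lemma symm (h : Cfg K₁ K₂ S₁ S₂) : Cfg K₂ K₁ S₂ S₁ where
  conv₁ := h.conv₂
  conv₂ := h.conv₁
  closed₁ := h.closed₂
  closed₂ := h.closed₁
  cpt := Set.inter_comm K₁ K₂ ▸ h.cpt
  ne := Set.inter_comm K₁ K₂ ▸ h.ne
  strip := Set.inter_comm K₁ K₂ ▸ h.strip
  front := by rw [Set.inter_comm, Set.union_comm]; exact h.front
  pre₁ := h.pre₂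
  pre₂ := h.pre₁
  inter := by rw [Set.inter_comm]; exact h.inter
  sub₁ := h.sub₂
  sub₂ := h.sub₁

/-- If the upper part of `∂I` lies in `∂K₁`, and `I` has a point above the axis, then `K₁` coincides
with `I` above the axis: a segment from an interior point of `I` above the axis to a point of `K₁`
above the axis outside `I` would cross `∂I` in an interior point of `K₁`. -/
lemma capsub (h : Cfg K₁ K₂ S₁ S₂) (hS : ∀ a ∈ frontier (K₁ ∩ K₂), 0 < a.2 → a ∈ S₁)
    {p : ℝ × ℝ} (hp : p ∈ K₁ ∩ K₂) (hp2 : 0 < p.2) {q : ℝ × ℝ} (hq : q ∈ K₁) (hq2 : 0 < q.2) :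
    q ∈ K₁ ∩ K₂ := by
  by_contra hqI
  -- an interior point of `I` above the axis
  obtain ⟨c, hc, hc2⟩ : ∃ c ∈ interior (K₁ ∩ K₂), 0 < c.2 := by
    have hpc : p ∈ closure (interior (K₁ ∩ K₂)) := by
      rw [h.conv.closure_interior_eq_closure_of_nonempty_interior h.ne]
      exact subset_closure hp
    obtain ⟨c, hc, hc'⟩ := mem_closure_iff.1 hpc {q | 0 < q.2}
      (isOpen_lt continuous_const continuous_snd) hp2
    exact ⟨c, hc', hc⟩
  obtain ⟨e, he, hef⟩ : (segment ℝ c q ∩ frontier (K₁ ∩ K₂)).Nonempty :=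
    frontier_meets (convex_segment c q).isPreconnected (left_mem_segment ℝ c q)
      (interior_subset hc) (right_mem_segment ℝ c q) hqI
  obtain ⟨a, b, ha, hb, hab, rfl⟩ := he
  have ha0 : a ≠ 0 := by
    rintro rfl
    have hb1 : b = 1 := by linarith
    apply hqI
    have := h.front_sub hef
    simpa [hb1] using this
  have hapos : 0 < a := ha.lt_of_ne ha0.symm
  have hint : a • c + b • q ∈ interior K₁ :=
    h.conv₁.combo_interior_self_mem_interior (interior_mono Set.inter_subset_left hc) hq hapos hb hab
  refine (h.sub₁ (hS _ hef ?_)).2 hint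
  simp only [Prod.snd_add, Prod.smul_snd, smul_eq_mul]
  have := mul_pos hapos hc2
  have := mul_nonneg hb hq2.le
  linarith

/-- The hypotheses of `key_strict` hold for `K₁` if the upper part of `∂I` lies in `S₁`. -/
lemma key_upper_aux (h : Cfg K₁ K₂ S₁ S₂) (hS : ∀ a ∈ frontier (K₁ ∩ K₂), 0 < a.2 → a ∈ S₁)
    {z q D : ℝ × ℝ} (hz : z ∈ frontier (K₁ ∩ K₂)) (hz2 : 0 ≤ z.2) (hzv : z.2 = 0 → z.1 = 1)
    (hq : q ∈ K₁ ∩ K₂) (hzq : 0 < z.1 * q.2 - z.2 * q.1)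
    (hD : D ∈ interior K₁) (hzD : z + D ∈ interior K₁) : q + D ∈ interior K₁ := by
  have hzs := h.strip z (h.front_sub hz)
  have hex : ∃ p ∈ K₁ ∩ K₂, 0 < p.2 := by
    rcases hz2.lt_or_eq with h1 | h1
    · exact ⟨z, h.front_sub hz, h1⟩
    · refine ⟨q, hq, ?_⟩
      have := hzv h1.symm
      rw [← h1, this] at hzq
      linarith
  obtain ⟨p, hp, hp2⟩ := hex
  have hzint : z ∈ S₁ := by
    rcases hz2.lt_or_eq with h1 | h1
    · exact hS z hz h1
    · have : z = (1, 0) := by ext <;> simp [hzv h1.symm, h1.symm]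
      rw [this]; exact h.v₁
  exact key_strict h.conv₁ (h.front_sub h.z_front).1 (h.sub₁ h.z₁).2 (h.front_sub h.v_front).1
    (h.sub₁ h.v₁).2 (fun q hq hq2 => h.strip q (h.capsub hS hp hp2 hq hq2)) (h.front_sub hz).1
    (h.sub₁ hzint).2 hz2 hzv hzs.1 hzs.2 hq.1 (h.strip q hq).1 hzq hD hzD

/-- `L` is the translate `K - D` of `K` for some vector `D`. -/
def IsTr (L K : Set (ℝ × ℝ)) : Prop := ∃ D : ℝ × ℝ, L = (fun q => q + D) ⁻¹' K

lemma IsTr.interior {L K : Set (ℝ × ℝ)} (h : IsTr L K) :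
    ∃ D : ℝ × ℝ, ∀ q, q ∈ interior L ↔ q + D ∈ interior K := by
  obtain ⟨D, rfl⟩ := h
  refine ⟨D, fun q => ?_⟩
  have := (Homeomorph.addRight D).preimage_interior K
  rw [Homeomorph.coe_addRight] at this
  rw [← this]; rfl

/-- The key property above the axis, for a common translate `L` of `K₁` and `K₂`. -/
lemma key_upper (h : Cfg K₁ K₂ S₁ S₂) {L : Set (ℝ × ℝ)} (hL₁ : IsTr L K₁) (hL₂ : IsTr L K₂)
    {z q : ℝ × ℝ} (hz : z ∈ frontier (K₁ ∩ K₂)) (hz2 : 0 ≤ z.2) (hzv : z.2 = 0 → z.1 = 1)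
    (hq : q ∈ K₁ ∩ K₂) (hzq : 0 < z.1 * q.2 - z.2 * q.1)
    (h0L : (0 : ℝ × ℝ) ∈ interior L) (hzL : z ∈ interior L) : q ∈ interior L := by
  rcases h.upper with hS | hS
  · obtain ⟨D, hD⟩ := hL₁.interior
    rw [hD] at h0L hzL ⊢
    rw [zero_add] at h0L
    exact h.key_upper_aux hS hz hz2 hzv hq hzq h0L hzL
  · obtain ⟨D, hD⟩ := hL₂.interior
    rw [hD] at h0L hzL ⊢
    rw [zero_add] at h0L
    rw [Set.inter_comm] at hS hz hq
    exact h.symm.key_upper_aux hS hz hz2 hzv hq hzq h0L hzL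

/-- Reflection in the `x`-axis. -/
def refl : (ℝ × ℝ) ≃L[ℝ] (ℝ × ℝ) :=
  (ContinuousLinearEquiv.refl ℝ ℝ).prodCongr (ContinuousLinearEquiv.neg ℝ)

@[simp] lemma refl_apply (q : ℝ × ℝ) : refl q = (q.1, -q.2) := rfl

lemma reflect (h : Cfg K₁ K₂ S₁ S₂) :
    Cfg (refl ⁻¹' K₁) (refl ⁻¹' K₂) (refl ⁻¹' S₁) (refl ⁻¹' S₂) where
  conv₁ := h.conv₁.linear_preimage refl.toLinearEquiv.toLinearMap
  conv₂ := h.conv₂.linear_preimage refl.toLinearEquiv.toLinearMap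
  closed₁ := h.closed₁.preimage refl.continuous
  closed₂ := h.closed₂.preimage refl.continuous
  cpt := by
    rw [← Set.preimage_inter]
    exact (refl.toHomeomorph.isCompact_preimage).2 h.cpt
  ne := by
    rw [← Set.preimage_inter]
    have := refl.toHomeomorph.preimage_interior (K₁ ∩ K₂)
    obtain ⟨c, hc⟩ := h.ne
    refine ⟨refl c, ?_⟩
    have h2 : refl c ∈ refl ⁻¹' (interior (K₁ ∩ K₂)) := by
      simpa using hc
    exact this ▸ h2
  strip q hq := h.strip (refl q) hq
  front := by
    rw [← Set.preimage_inter, ← Set.preimage_union, ← h.front]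
    exact (refl.toHomeomorph.preimage_frontier _).symm
  pre₁ := refl.toHomeomorph.isPreconnected_preimage.2 h.pre₁
  pre₂ := refl.toHomeomorph.isPreconnected_preimage.2 h.pre₂
  inter := by
    rw [← Set.preimage_inter, h.inter]
    ext q
    simp [Prod.ext_iff]
  sub₁ := (Set.preimage_mono h.sub₁).trans (refl.toHomeomorph.preimage_frontier _).subset
  sub₂ := (Set.preimage_mono h.sub₂).trans (refl.toHomeomorph.preimage_frontier _).subset

lemma IsTr.reflect {L K : Set (ℝ × ℝ)} (h : IsTr L K) : IsTr (refl ⁻¹' L) (refl ⁻¹' K) := by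
  obtain ⟨D, rfl⟩ := h
  refine ⟨refl D, ?_⟩
  ext q
  change refl q + D ∈ K ↔ refl (q + refl D) ∈ K
  rw [map_add]
  simp

/-- `q` lies strictly beyond the line `0z`, on the side away from `(1, 0)`.  If `z` is on the
`x`-axis, both sides of the line are admitted. -/
def Far (z q : ℝ × ℝ) : Prop :=
  (0 ≤ z.2 ∧ 0 < z.1 * q.2 - z.2 * q.1) ∨ (z.2 ≤ 0 ∧ z.1 * q.2 - z.2 * q.1 < 0)

/-- The key property: if the translate `L` has `0` and the boundary point `z` of `I` in its interior,
then every point of `I` beyond the line `0z` is interior to `L`.  The lower half plane is reduced to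
the upper one by reflection. -/
lemma key_interior (h : Cfg K₁ K₂ S₁ S₂) {L : Set (ℝ × ℝ)} (hL₁ : IsTr L K₁) (hL₂ : IsTr L K₂)
    {z q : ℝ × ℝ} (hz : z ∈ frontier (K₁ ∩ K₂)) (hzv : z.2 = 0 → z.1 = 1)
    (hq : q ∈ K₁ ∩ K₂) (hzq : Far z q)
    (h0L : (0 : ℝ × ℝ) ∈ interior L) (hzL : z ∈ interior L) : q ∈ interior L := by
  rcases hzq with ⟨hz2, hzq⟩ | ⟨hz2, hzq⟩
  · exact h.key_upper hL₁ hL₂ hz hz2 hzv hq hzq h0L hzL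
  · have hi : ∀ p, refl p ∈ interior (refl ⁻¹' L) ↔ p ∈ interior L := by
      intro p
      have := refl.toHomeomorph.preimage_interior L
      change refl ⁻¹' (interior L) = interior (refl ⁻¹' L) at this
      rw [← this]
      simp
    have := h.reflect.key_upper (z := refl z) (q := refl q) hL₁.reflect hL₂.reflect ?_ ?_ ?_ ?_ ?_
      ?_ ?_
    · exact (hi q).1 this
    · have := refl.toHomeomorph.preimage_frontier (K₁ ∩ K₂)
      change refl ⁻¹' (frontier (K₁ ∩ K₂)) = frontier (refl ⁻¹' (K₁ ∩ K₂)) at this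
      rw [← Set.preimage_inter, ← this]
      simpa using hz
    · simpa using hz2
    · simpa using hzv
    · rw [← Set.preimage_inter]; simpa using hq
    · simp only [refl_apply]; linarith
    · have : refl (0 : ℝ × ℝ) ∈ interior (refl ⁻¹' L) := (hi 0).2 h0L
      rwa [map_zero] at this
    · exact (hi z).2 hzL

/-- The key property with interiors relaxed: if `0 ∈ L°` and `z ∈ L`, then `L` contains every point of
`I` beyond the line `0z`. -/
lemma key_closed (h : Cfg K₁ K₂ S₁ S₂) {L : Set (ℝ × ℝ)} (hL₁ : IsTr L K₁) (hL₂ : IsTr L K₂)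
    (hLc : IsClosed L) (hLconv : Convex ℝ L)
    {z q : ℝ × ℝ} (hz : z ∈ frontier (K₁ ∩ K₂)) (hzv : z.2 = 0 → z.1 = 1)
    (hq : q ∈ K₁ ∩ K₂) (hzq : Far z q)
    (h0L : (0 : ℝ × ℝ) ∈ interior L) (hzL : z ∈ L) : q ∈ L := by
  -- translating `L` slightly along `z` makes `z` an interior point
  have hnear : ∀ᶠ s : ℝ in nhdsWithin 0 (Set.Ioi 0), q + s • (-z) ∈ L := by
    have h1 : ∀ᶠ s : ℝ in nhds 0, s • (-z) ∈ interior L :=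
      (Continuous.tendsto' (by fun_prop) 0 0 (by simp)).eventually
        (isOpen_interior.mem_nhds h0L)
    have h2 : ∀ᶠ s : ℝ in nhds 0, s < 1 := eventually_lt_nhds one_pos
    filter_upwards [h1.filter_mono nhdsWithin_le_nhds, h2.filter_mono nhdsWithin_le_nhds,
      self_mem_nhdsWithin] with s hs hs1 hs0
    have hs0 : 0 < s := hs0
    have tr : ∀ {K}, IsTr L K → IsTr ((fun p => p + s • (-z)) ⁻¹' L) K := by
      rintro K ⟨D, rfl⟩
      exact ⟨s • (-z) + D, by ext; simp [add_assoc]⟩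
    have hi : ∀ p, p ∈ interior ((fun p => p + s • (-z)) ⁻¹' L) ↔ p + s • (-z) ∈ interior L := by
      intro p
      have := (Homeomorph.addRight (s • (-z))).preimage_interior L
      rw [Homeomorph.coe_addRight] at this
      rw [← this]; rfl
    have := h.key_interior (tr hL₁) (tr hL₂) hz hzv hq hzq ?_ ?_
    · exact interior_subset ((hi q).1 this)
    · rw [hi, zero_add]; exact hs
    · rw [hi]
      have := hLconv.combo_interior_self_mem_interior h0L hzL (a := s) (b := 1 - s) hs0
        (by linarith) (by ring)
      convert this using 1
      module
  have hlim : Filter.Tendsto (fun s : ℝ => q + s • (-z)) (nhdsWithin 0 (Set.Ioi 0)) (nhds q) :=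
    (Continuous.tendsto' (by fun_prop) 0 q (by simp)).mono_left nhdsWithin_le_nhds
  exact hLc.mem_of_tendsto hlim hnear

end Cfg

/-! ### Radial projection -/

/-- The radial projection from `0` onto the frontier of `J`; it sends `0` to `0`. -/
noncomputable def rad (J : Set (ℝ × ℝ)) (d : ℝ × ℝ) : ℝ × ℝ := (gauge J d)⁻¹ • d

section Rad
variable {J : Set (ℝ × ℝ)}

lemma rad_pos (hb : Bornology.IsBounded J) (h0 : (0 : ℝ × ℝ) ∈ interior J) {d : ℝ × ℝ}
    (hd : d ≠ 0) : 0 < (gauge J d)⁻¹ :=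
  inv_pos.2 ((gauge_pos (absorbent_nhds_zero (mem_interior_iff_mem_nhds.1 h0))
    (NormedSpace.isVonNBounded_of_isBounded ℝ hb)).2 hd)

lemma rad_mem (hJ : Convex ℝ J) (hb : Bornology.IsBounded J) (h0 : (0 : ℝ × ℝ) ∈ interior J)
    {d : ℝ × ℝ} (hd : d ≠ 0) : rad J d ∈ frontier J := by
  have h := rad_pos hb h0 hd
  rw [← gauge_eq_one_iff_mem_frontier hJ (mem_interior_iff_mem_nhds.1 h0), rad,
    gauge_smul_of_nonneg h.le, smul_eq_mul, inv_mul_cancel₀ (inv_pos.1 h).ne']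

lemma rad_eq (hJ : Convex ℝ J) (h0 : (0 : ℝ × ℝ) ∈ interior J)
    {d : ℝ × ℝ} (hd : d ∈ frontier J) : rad J d = d := by
  rw [← gauge_eq_one_iff_mem_frontier hJ (mem_interior_iff_mem_nhds.1 h0)] at hd
  simp [rad, hd]

lemma rad_smul {t : ℝ} (ht : 0 < t) (d : ℝ × ℝ) : rad J (t • d) = rad J d := by
  rw [rad, rad, gauge_smul_of_nonneg ht.le, smul_smul, smul_eq_mul]
  congr 1
  field_simp

lemma rad_preconnected (hJ : Convex ℝ J) (hb : Bornology.IsBounded J)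
    (h0 : (0 : ℝ × ℝ) ∈ interior J) {S : Set (ℝ × ℝ)} (hS : IsPreconnected S)
    (h0S : (0 : ℝ × ℝ) ∉ S) : IsPreconnected (rad J '' S) := by
  refine hS.image _ (ContinuousOn.smul (ContinuousOn.inv₀
    (continuous_gauge hJ (mem_interior_iff_mem_nhds.1 h0)).continuousOn ?_) continuousOn_id)
  intro x hx
  exact (inv_pos.1 (rad_pos hb h0 (fun h => h0S (h ▸ hx)))).ne'

end Rad

/-! ### Connectedness of the two boundary parts -/

/-- The properties of `I` and `I'`, in coordinates with `u = (0, 0)` and `v = (1, 0)`, from which both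
connectedness statements are deduced; `far_int` and `far_mem` are the two versions of the key
property. -/
structure Pair (I I' : Set (ℝ × ℝ)) : Prop where
  conv : Convex ℝ I
  cpt : IsCompact I
  ne : (interior I).Nonempty
  strip : ∀ q ∈ I, 0 ≤ q.1 ∧ q.1 ≤ 1
  zero_front : (0 : ℝ × ℝ) ∈ frontier I
  v_front : ((1, 0) : ℝ × ℝ) ∈ frontier I
  conv' : Convex ℝ I'
  cpt' : IsCompact I'
  zero_int : (0 : ℝ × ℝ) ∈ interior I'
  far_int : ∀ z ∈ frontier I, (z.2 = 0 → z.1 = 1) → ∀ q ∈ I, Cfg.Far z q →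
    z ∈ interior I' → q ∈ interior I'
  far_mem : ∀ z ∈ frontier I, (z.2 = 0 → z.1 = 1) → ∀ q ∈ I, Cfg.Far z q → z ∈ I' → q ∈ I'

namespace Pair
variable {I I' : Set (ℝ × ℝ)}

lemma front_sub (h : Pair I I') : frontier I ⊆ I := h.cpt.isClosed.frontier_subset
lemma front_sub' (h : Pair I I') : frontier I' ⊆ I' := h.cpt'.isClosed.frontier_subset

/-- Every `z ∈ ∂I ∩ I'` is joined to `0` inside `∂I ∩ I'`: by the segment `0z` if it lies in `∂I`, and
otherwise by the arc of `∂I` beyond the line `0z`, which is obtained by radial projection from a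
point of the segment interior to `I`. -/
lemma pre_left (h : Pair I I') : IsPreconnected (frontier I ∩ I') := by
  refine isPreconnected_of_forall 0 fun z ⟨hz, hz'⟩ => ?_
  have h0I' : (0 : ℝ × ℝ) ∈ I' := interior_subset h.zero_int
  have h0I := h.front_sub h.zero_front
  by_cases hseg : segment ℝ 0 z ⊆ frontier I
  · exact ⟨segment ℝ 0 z, fun p hp => ⟨hseg hp, h.conv'.segment_subset h0I' hz' hp⟩,
      left_mem_segment _ _ _, right_mem_segment _ _ _, (convex_segment 0 z).isPreconnected⟩
  obtain ⟨m, hm, hmf⟩ := Set.not_subset.1 hseg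
  have hmI : m ∈ interior I := by
    by_contra hmi
    exact hmf ⟨subset_closure (h.conv.segment_subset h0I (h.front_sub hz) hm), hmi⟩
  have hz0 : z ≠ 0 := by
    rintro rfl
    rw [segment_same] at hm
    exact hmf (hm ▸ hz)
  obtain ⟨a, s, ha, hs, has, rfl⟩ := hm
  rw [smul_zero, zero_add] at hmf hmI
  have hs0 : 0 < s := hs.lt_of_ne (by rintro rfl; exact hmf (by simpa using h.zero_front))
  have hs1 : 0 < 1 - s := by
    have : s ≠ 1 := by rintro rfl; exact hmf (by simpa using hz)
    have : s < 1 := lt_of_le_of_ne (by linarith) this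
    linarith
  -- a point of the axis strictly between `m` and `(1, 0)` would be interior to `I`
  have hzv : z.2 = 0 → z.1 = 1 := by
    intro hz2
    by_contra hz1
    have hlt : z.1 < 1 := lt_of_le_of_ne (h.strip z (h.front_sub hz)).2 hz1
    have hpos : 0 ≤ z.1 := (h.strip z (h.front_sub hz)).1
    refine hz.2 (comb2 h.conv hmI (h.front_sub h.v_front) (a := 1 - z.1) (b := z.1 - s * z.1)
      (by linarith) (by nlinarith) ?_ ?_)
    · simp only [Prod.smul_fst, smul_eq_mul]; ring
    · simp only [Prod.smul_snd, smul_eq_mul, hz2]; ring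
  -- `c` is the sign selecting the side of the line `0z` away from `(1, 0)`
  obtain ⟨c, hcsq, hc⟩ : ∃ c : ℝ, c * c = 1 ∧ ((c = 1 ∧ 0 ≤ z.2) ∨ (c = -1 ∧ z.2 ≤ 0)) := by
    rcases le_total 0 z.2 with h1 | h1
    · exact ⟨1, by norm_num, Or.inl ⟨rfl, h1⟩⟩
    · exact ⟨-1, by norm_num, Or.inr ⟨rfl, h1⟩⟩
  -- `I`, translated so that its interior point `m = s • z` becomes the origin
  set J : Set (ℝ × ℝ) := (fun d => s • z + d) ⁻¹' I with hJdef
  have hJ : Convex ℝ J := h.conv.translate_preimage_right _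
  have hfr : ∀ d, d ∈ frontier J ↔ s • z + d ∈ frontier I := by
    intro d
    have := (Homeomorph.addLeft (s • z)).preimage_frontier I
    rw [Homeomorph.coe_addLeft] at this
    rw [hJdef, ← this]; rfl
  have h0J : (0 : ℝ × ℝ) ∈ interior J := by
    have := (Homeomorph.addLeft (s • z)).preimage_interior I
    rw [Homeomorph.coe_addLeft] at this
    rw [hJdef, ← this]
    simpa using hmI
  have hJb : Bornology.IsBounded J := by
    have : J = (Homeomorph.addLeft (s • z)) ⁻¹' I := rfl
    rw [this]
    exact ((Homeomorph.addLeft (s • z)).isCompact_preimage.2 h.cpt).isBounded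
  -- an open half plane bounded by the line `0z`, together with two opposite boundary directions
  set S : Set (ℝ × ℝ) := {d | 0 < c * (z.1 * d.2 - z.2 * d.1) ∨ d = z ∨ d = -z} with hSdef
  have hzz : 0 < z.1 * z.1 + z.2 * z.2 := by
    rcases eq_or_ne z.1 0 with h1 | h1
    · have h2 : z.2 ≠ 0 := fun h2 => hz0 (by ext <;> simp [h1, h2])
      rw [h1]; have := mul_self_pos.2 h2; linarith
    · have := mul_self_pos.2 h1; have := mul_self_nonneg z.2; linarith
  have hS : IsPreconnected S := by
    refine isPreconnected_of_forall (c • ((-z.2, z.1) : ℝ × ℝ)) fun d hd =>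
      ⟨segment ℝ (c • ((-z.2, z.1) : ℝ × ℝ)) d, ?_, left_mem_segment _ _ _,
        right_mem_segment _ _ _, (convex_segment _ _).isPreconnected⟩
    rintro _ ⟨α, β, hα, hβ, hαβ, rfl⟩
    rcases hα.lt_or_eq with hα | hα
    · left
      have hd' : 0 ≤ c * (z.1 * d.2 - z.2 * d.1) := by
        rcases hd with hd | hd | hd
        · exact hd.le
        · rw [hd]; apply le_of_eq; ring
        · rw [hd]; apply le_of_eq; simp only [Prod.fst_neg, Prod.snd_neg]; ring
      simp only [Prod.fst_add, Prod.snd_add, Prod.smul_fst, Prod.smul_snd, smul_eq_mul]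
      have h1 := mul_pos hα hzz
      have h2 := mul_nonneg hβ hd'
      have h3 : c * (z.1 * (α * (c * z.1) + β * d.2) - z.2 * (α * (c * -z.2) + β * d.1)) =
        (c * c) * (α * (z.1 * z.1 + z.2 * z.2)) + β * (c * (z.1 * d.2 - z.2 * d.1)) := by ring
      rw [h3, hcsq]
      linarith
    · have hβ1 : β = 1 := by linarith
      rw [← hα, hβ1]
      simpa using hd
  have h0S : (0 : ℝ × ℝ) ∉ S := by
    rintro (h1 | h1 | h1)
    · simp at h1
    · exact hz0 h1.symm
    · exact hz0 (by simpa using h1.symm)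
  have radz : rad J z = z - s • z := by
    have : z = (1 - s)⁻¹ • (z - s • z) := by
      have : z - s • z = (1 - s) • z := by module
      rw [this, smul_smul, inv_mul_cancel₀ hs1.ne', one_smul]
    conv_lhs => rw [this]
    rw [rad_smul (inv_pos.2 hs1), rad_eq hJ h0J]
    rw [hfr]; simpa using hz
  have radz' : rad J (-z) = -(s • z) := by
    have : -z = s⁻¹ • (-(s • z)) := by
      rw [smul_neg, smul_smul, inv_mul_cancel₀ hs0.ne', one_smul]
    conv_lhs => rw [this]
    rw [rad_smul (inv_pos.2 hs0), rad_eq hJ h0J]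
    rw [hfr]; simpa using h.zero_front
  refine ⟨(fun d => s • z + d) '' (rad J '' S), ?_, ?_, ?_,
    (rad_preconnected hJ hJb h0J hS h0S).image _ (by fun_prop)⟩
  · rintro _ ⟨_, ⟨d, hd, rfl⟩, rfl⟩
    have hd0 : d ≠ 0 := fun h => h0S (h ▸ hd)
    have hfro : s • z + rad J d ∈ frontier I := (hfr _).1 (rad_mem hJ hJb h0J hd0)
    refine ⟨hfro, ?_⟩
    rcases hd with hd | hd | hd
    · refine h.far_mem z hz hzv _ (h.front_sub hfro) ?_ hz'
      have hk := rad_pos hJb h0J hd0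
      have hcr : z.1 * (s • z + rad J d).2 - z.2 * (s • z + rad J d).1 =
          (gauge J d)⁻¹ * (z.1 * d.2 - z.2 * d.1) := by
        simp only [rad, Prod.fst_add, Prod.snd_add, Prod.smul_fst, Prod.smul_snd, smul_eq_mul]
        ring
      rcases hc with ⟨rfl, h2⟩ | ⟨rfl, h2⟩
      · refine Or.inl ⟨h2, ?_⟩
        rw [hcr]
        exact mul_pos hk (by linarith)
      · refine Or.inr ⟨h2, ?_⟩
        rw [hcr]
        exact mul_neg_of_pos_of_neg hk (by linarith)
    · rw [hd, radz]; simpa using hz'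
    · rw [hd, radz']; simpa using h0I'
  · exact ⟨_, ⟨-z, Or.inr (Or.inr rfl), rfl⟩, by simp only [radz']; simp⟩
  · exact ⟨_, ⟨z, Or.inr (Or.inl rfl), rfl⟩, by simp only [radz]; simp⟩

/-- If the ray of `m` lies strictly between those of `y₁` and `y₂`, it leaves `I'` inside `I`.
Otherwise it meets `∂I` in a point interior to `I'`, and `far_int` makes `y₁` or `y₂` an interior
point of `I'`. -/
lemma rad_mem_between (h : Pair I I') {y₁ y₂ m : ℝ × ℝ} (hy₁ : y₁ ∈ frontier I') (hy₁I : y₁ ∈ I)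
    (hy₂ : y₂ ∈ frontier I') (hy₂I : y₂ ∈ I) (hm : m ∈ I) (hm0 : m ≠ 0)
    (h1 : 0 < m.1 * y₁.2 - m.2 * y₁.1) (h2 : m.1 * y₂.2 - m.2 * y₂.1 < 0) :
    rad I' m ∈ frontier I' ∩ I := by
  have hfr := rad_mem h.conv' h.cpt'.isBounded h.zero_int hm0
  refine ⟨hfr, ?_⟩
  by_contra hyI
  have h0I := h.front_sub h.zero_front
  have hvI := h.front_sub h.v_front
  have hk0 := rad_pos h.cpt'.isBounded h.zero_int hm0
  obtain ⟨k, hk⟩ : ∃ k, k = (gauge I' m)⁻¹ := ⟨_, rfl⟩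
  have hy : rad I' m = k • m := by rw [hk]; rfl
  rw [hy] at hfr hyI
  rw [← hk] at hk0
  clear hk hy
  have hk1 : 1 < k := by
    by_contra hle
    push Not at hle
    exact hyI (h.conv.smul_mem_of_zero_mem h0I hm ⟨hk0.le, hle⟩)
  have hyI' := h.front_sub' hfr
  -- the ray meets `∂I` inside the interior of `I'`; on the `x`-axis the point to take is `(1, 0)`
  have hmain : ∃ r : ℝ, 0 < r ∧ r • m ∈ frontier I ∧ r • m ∈ interior I' ∧
      ((r • m).2 = 0 → (r • m).1 = 1) := by
    obtain ⟨e, he, hef⟩ := frontier_meets (convex_segment m (k • m)).isPreconnected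
      (left_mem_segment ℝ _ _) hm (right_mem_segment ℝ _ _) hyI
    obtain ⟨a, b, ha, hb, hab, rfl⟩ := he
    have ha0 : 0 < a := ha.lt_of_ne (by
      rintro rfl
      have hb1 : b = 1 := by linarith
      apply hyI
      have := h.front_sub hef
      simpa [hb1] using this)
    have hem : a • m + b • k • m = (a + b * k) • m := by module
    rw [hem] at hef
    have hr0 : 0 < a + b * k := by positivity
    have hrk : a + b * k < k := by nlinarith
    by_cases h20 : ((a + b * k) • m).2 = 0
    · have hm2 : m.2 = 0 := by
        simpa [hr0.ne'] using h20
      have hm1 : 0 < m.1 := (h.strip m hm).1.lt_of_ne (fun h0 => hm0 (by ext <;> simp [hm2, ← h0]))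
      have hv : (m.1)⁻¹ • m = (1, 0) := by
        ext
        · simp [hm1.ne']
        · simp [hm2]
      have hy1 : 1 < k * m.1 := by
        by_contra hle
        push Not at hle
        apply hyI
        have := h.conv.smul_mem_of_zero_mem h0I hvI (t := k * m.1) ⟨by positivity, hle⟩
        convert this using 1
        ext
        · simp
        · simp [hm2]
      refine ⟨(m.1)⁻¹, inv_pos.2 hm1, hv ▸ h.v_front, ?_, fun _ => by rw [hv]⟩
      rw [hv]
      refine comb2 h.conv' h.zero_int hyI' (a := k * m.1 - 1) (b := 1) (by linarith) (by norm_num)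
        ?_ ?_
      · simp
      · simp [hm2]
    · refine ⟨a + b * k, hr0, hef, ?_, fun h => absurd h h20⟩
      refine comb2 h.conv' h.zero_int hyI' (a := k - (a + b * k)) (b := a + b * k)
        (by linarith) hr0.le ?_ ?_
      · simp only [Prod.smul_fst, smul_eq_mul, Prod.fst_zero]; ring
      · simp only [Prod.smul_snd, smul_eq_mul, Prod.snd_zero]; ring
  obtain ⟨r, hr, hrf, hri, hrv⟩ := hmain
  have hcr : ∀ q : ℝ × ℝ, (r • m).1 * q.2 - (r • m).2 * q.1 = r * (m.1 * q.2 - m.2 * q.1) := by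
    intro q
    simp only [Prod.smul_fst, Prod.smul_snd, smul_eq_mul]; ring
  rcases le_total 0 (r • m).2 with hz2 | hz2
  · refine hy₁.2 (h.far_int _ hrf hrv _ hy₁I (Or.inl ⟨hz2, ?_⟩) hri)
    rw [hcr]; exact mul_pos hr h1
  · refine hy₂.2 (h.far_int _ hrf hrv _ hy₂I (Or.inr ⟨hz2, ?_⟩) hri)
    rw [hcr]; exact mul_neg_of_pos_of_neg hr h2

/-- Points of `∂I' ∩ I` that are not collinear with `0` are joined in `∂I' ∩ I` by the radial projection
of the segment between them. -/
lemma join (h : Pair I I') {y₁ y₂ : ℝ × ℝ} (hy₁ : y₁ ∈ frontier I' ∩ I)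
    (hy₂ : y₂ ∈ frontier I' ∩ I) (hc : y₁.1 * y₂.2 - y₁.2 * y₂.1 ≠ 0) :
    ∃ t ⊆ frontier I' ∩ I, y₁ ∈ t ∧ y₂ ∈ t ∧ IsPreconnected t := by
  have hr₁ := rad_eq h.conv' h.zero_int hy₁.1
  have hr₂ := rad_eq h.conv' h.zero_int hy₂.1
  have h0 : (0 : ℝ × ℝ) ∉ segment ℝ y₁ y₂ := by
    rintro ⟨a, b, ha, hb, hab, h0⟩
    have e1 := congrArg Prod.fst h0
    have e2 := congrArg Prod.snd h0
    simp only [Prod.fst_add, Prod.snd_add, Prod.smul_fst, Prod.smul_snd, smul_eq_mul,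
      Prod.fst_zero, Prod.snd_zero] at e1 e2
    have ha0 : a * (y₁.1 * y₂.2 - y₁.2 * y₂.1) = 0 := by
      linear_combination y₂.2 * e1 - y₂.1 * e2
    have hb0 : b * (y₁.1 * y₂.2 - y₁.2 * y₂.1) = 0 := by
      linear_combination y₁.1 * e2 - y₁.2 * e1
    have ha0 := (mul_eq_zero.1 ha0).resolve_right hc
    have hb0 := (mul_eq_zero.1 hb0).resolve_right hc
    rw [ha0, hb0] at hab; norm_num at hab
  refine ⟨rad I' '' segment ℝ y₁ y₂, ?_, ⟨y₁, left_mem_segment _ _ _, hr₁⟩,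
    ⟨y₂, right_mem_segment _ _ _, hr₂⟩, rad_preconnected h.conv' h.cpt'.isBounded h.zero_int
      (convex_segment _ _).isPreconnected h0⟩
  rintro _ ⟨m, hm, rfl⟩
  have hmI := h.conv.segment_subset hy₁.2 hy₂.2 hm
  have hm0 : m ≠ 0 := fun h => h0 (h ▸ hm)
  obtain ⟨a, b, ha, hb, hab, rfl⟩ := hm
  rcases ha.lt_or_eq with ha | ha
  swap
  · have : b = 1 := by linarith
    rw [← ha, this, zero_smul, one_smul, zero_add, hr₂]; exact hy₂
  rcases hb.lt_or_eq with hb | hb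
  swap
  · have : a = 1 := by linarith
    rw [← hb, this, zero_smul, one_smul, add_zero, hr₁]; exact hy₁
  have c1 : (a • y₁ + b • y₂).1 * y₁.2 - (a • y₁ + b • y₂).2 * y₁.1 =
      -(b * (y₁.1 * y₂.2 - y₁.2 * y₂.1)) := by
    simp only [Prod.fst_add, Prod.snd_add, Prod.smul_fst, Prod.smul_snd, smul_eq_mul]; ring
  have c2 : (a • y₁ + b • y₂).1 * y₂.2 - (a • y₁ + b • y₂).2 * y₂.1 =
      a * (y₁.1 * y₂.2 - y₁.2 * y₂.1) := by
    simp only [Prod.fst_add, Prod.snd_add, Prod.smul_fst, Prod.smul_snd, smul_eq_mul]; ring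
  rcases hc.lt_or_gt with hc | hc
  · refine h.rad_mem_between hy₁.1 hy₁.2 hy₂.1 hy₂.2 hmI hm0 ?_ ?_
    · rw [c1]; have := mul_neg_of_pos_of_neg hb hc; linarith
    · rw [c2]; exact mul_neg_of_pos_of_neg ha hc
  · refine h.rad_mem_between hy₂.1 hy₂.2 hy₁.1 hy₁.2 hmI hm0 ?_ ?_
    · rw [c2]; exact mul_pos ha hc
    · rw [c1]; have := mul_pos hb hc; linarith

/-- The boundary of `I'` meets `I` in a connected set.  Points not collinear with `0` are handled by
`join`; two points on the same ray coincide; two points on opposite rays lie on the edge `x = 0` of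
the strip and are both joined to a third point. -/
lemma pre_right (h : Pair I I') : IsPreconnected (frontier I' ∩ I) := by
  refine isPreconnected_of_forall_pair fun y₁ hy₁ y₂ hy₂ => ?_
  by_cases hc : y₁.1 * y₂.2 - y₁.2 * y₂.1 = 0
  swap
  · exact h.join hy₁ hy₂ hc
  have hne : ∀ y ∈ frontier I', 0 < y.1 * y.1 + y.2 * y.2 := by
    intro y hy
    have hy0 : y ≠ 0 := by rintro rfl; exact hy.2 h.zero_int
    rcases eq_or_ne y.1 0 with h1 | h1
    · have h2 : y.2 ≠ 0 := fun h2 => hy0 (by ext <;> simp [h1, h2])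
      rw [h1]; have := mul_self_pos.2 h2; linarith
    · have := mul_self_pos.2 h1; have := mul_self_nonneg y.2; linarith
  have n1 := hne _ hy₁.1
  have n2 := hne _ hy₂.1
  have s1 := (h.strip _ hy₁.2).1
  have s2 := (h.strip _ hy₂.2).1
  obtain ⟨N, hN⟩ : ∃ N, N = y₁.1 * y₁.1 + y₁.2 * y₁.2 := ⟨_, rfl⟩
  obtain ⟨δ, hδ⟩ : ∃ δ, δ = y₁.1 * y₂.1 + y₁.2 * y₂.2 := ⟨_, rfl⟩
  have e1 : N * y₂.1 = δ * y₁.1 := by rw [hN, hδ]; linear_combination -y₁.2 * hc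
  have e2 : N * y₂.2 = δ * y₁.2 := by rw [hN, hδ]; linear_combination y₁.1 * hc
  rw [← hN] at n1
  rcases lt_trichotomy δ 0 with hd | hd | hd
  · -- `y₁` and `y₂` are antipodal, on the line `x = 0`: join both to a third point
    have h11 : y₁.1 = 0 := by nlinarith [mul_nonneg n1.le s2]
    have h21 : y₂.1 = 0 := by
      rw [h11, mul_zero] at e1; exact (mul_eq_zero.1 e1).resolve_left n1.ne'
    have hprod : y₁.2 * y₂.2 < 0 := by rw [h11] at hδ; linarith
    obtain ⟨c, hcI⟩ := h.ne
    have hc1 : 0 < c.1 := by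
      have hnear : ∀ᶠ s : ℝ in nhds 0, c + s • ((-1, 0) : ℝ × ℝ) ∈ interior I :=
        (Continuous.tendsto' (by fun_prop) 0 c (by simp)).eventually
          (isOpen_interior.mem_nhds hcI)
      obtain ⟨s, hs, hs0⟩ := ((hnear.filter_mono nhdsWithin_le_nhds).and
        (self_mem_nhdsWithin (s := Set.Ioi (0 : ℝ)))).exists
      have := (h.strip _ (interior_subset hs)).1
      simp at this
      exact lt_of_lt_of_le hs0 this
    have hc0 : c ≠ 0 := by rintro rfl; simp at hc1
    have h3 : rad I' c ∈ frontier I' ∩ I := by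
      rcases lt_or_ge 0 y₁.2 with hs | hs
      · have : y₂.2 < 0 := by nlinarith
        refine h.rad_mem_between hy₁.1 hy₁.2 hy₂.1 hy₂.2 (interior_subset hcI) hc0 ?_ ?_
        · rw [h11]; have := mul_pos hc1 hs; linarith
        · rw [h21]; have := mul_neg_of_pos_of_neg hc1 this; linarith
      · have hs' : y₁.2 < 0 := lt_of_le_of_ne hs (by rintro h0; simp [h0] at hprod)
        have : 0 < y₂.2 := by nlinarith
        refine h.rad_mem_between hy₂.1 hy₂.2 hy₁.1 hy₁.2 (interior_subset hcI) hc0 ?_ ?_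
        · rw [h21]; have := mul_pos hc1 this; linarith
        · rw [h11]; have := mul_neg_of_pos_of_neg hc1 hs'; linarith
    have h31 : 0 < (rad I' c).1 := by
      have := rad_pos h.cpt'.isBounded h.zero_int hc0
      simp only [rad, Prod.smul_fst, smul_eq_mul]; positivity
    have hy12 : y₁.2 ≠ 0 := by rintro h0; simp [h0] at hprod
    have hy22 : y₂.2 ≠ 0 := by rintro h0; simp [h0] at hprod
    obtain ⟨t, ht, ht1, ht3, htp⟩ := h.join hy₁ h3 (by
      rw [h11, zero_mul, zero_sub]; exact neg_ne_zero.2 (mul_ne_zero hy12 h31.ne'))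
    obtain ⟨t', ht', ht2, ht3', htp'⟩ := h.join hy₂ h3 (by
      rw [h21, zero_mul, zero_sub]; exact neg_ne_zero.2 (mul_ne_zero hy22 h31.ne'))
    exact ⟨t ∪ t', Set.union_subset ht ht', Or.inl ht1, Or.inr ht2,
      htp.union _ ht3 ht3' htp'⟩
  · exfalso
    rw [hd, zero_mul] at e1 e2
    have h1 := (mul_eq_zero.1 e1).resolve_left n1.ne'
    have h2 := (mul_eq_zero.1 e2).resolve_left n1.ne'
    rw [h1, h2] at n2
    norm_num at n2
  · have : y₂ = (δ / N) • y₁ := by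
      ext
      · simp only [Prod.smul_fst, smul_eq_mul]; field_simp; linarith
      · simp only [Prod.smul_snd, smul_eq_mul]; field_simp; linarith
    have h12 : y₂ = y₁ := by
      rw [← rad_eq h.conv' h.zero_int hy₂.1, ← rad_eq h.conv' h.zero_int hy₁.1]
      conv_lhs => rw [this]
      exact rad_smul (div_pos hd n1) _
    exact ⟨{y₁}, by simpa using hy₁, rfl, h12, isPreconnected_singleton⟩

end Pair

/-! ### Passage to affine coordinates -/

section Transfer

/-- The linear functional `q ↦ det (d, q)`. -/
noncomputable def det (d : Pt) : Pt →ₗ[ℝ] ℝ where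
  toFun q := d 0 * q 1 - d 1 * q 0
  map_add' x y := by simp only [PiLp.add_apply]; ring
  map_smul' c x := by simp only [PiLp.smul_apply, smul_eq_mul, RingHom.id_apply]; ring

lemma det_apply (d q : Pt) : det d q = d 0 * q 1 - d 1 * q 0 := rfl

lemma det_eq_zero {d q : Pt} (hd : d ≠ 0) (h : det d q = 0) : ∃ t : ℝ, q = t • d := by
  rw [det_apply] at h
  by_cases h0 : d 0 = 0
  · have h1 : d 1 ≠ 0 := by
      intro h1; apply hd; ext i; fin_cases i <;> simp [h0, h1]
    refine ⟨q 1 / d 1, ?_⟩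
    ext i
    fin_cases i
    · rw [h0] at h
      simp only [zero_mul, zero_sub, neg_eq_zero, mul_eq_zero, h1, false_or] at h
      simp [h0, h]
    · simp [h1]
  · refine ⟨q 0 / d 0, ?_⟩
    ext i
    fin_cases i
    · simp [h0]
    · simp only [Fin.mk_one, PiLp.smul_apply, smul_eq_mul]
      field_simp
      linarith

lemma det_ne_zero {d : Pt} (hd : d ≠ 0) : det d ≠ 0 := by
  intro h
  apply hd
  have h1 : det d (!₂[-d 1, d 0]) = 0 := by rw [h]; rfl
  rw [det_apply] at h1
  simp only [Matrix.cons_val_zero, Matrix.cons_val_one] at h1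
  have h0 : d 0 = 0 := by nlinarith [mul_self_nonneg (d 0), mul_self_nonneg (d 1)]
  have h2 : d 1 = 0 := by nlinarith [mul_self_nonneg (d 0), mul_self_nonneg (d 1)]
  ext i; fin_cases i <;> simp [h0, h2]

lemma mem_line_iff {u d : Pt} (hd : d ≠ 0) (x : Pt) :
    (∃ t : ℝ, x = u + t • d) ↔ det d x = det d u := by
  constructor
  · rintro ⟨t, rfl⟩
    have : det d d = 0 := by rw [det_apply]; ring
    rw [map_add, map_smul, this, smul_zero, add_zero]
  · intro h
    obtain ⟨t, ht⟩ := det_eq_zero hd (q := x - u) (by rw [map_sub, h, sub_self])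
    exact ⟨t, by rw [← ht]; abel⟩

/-- If both sides of the line `l` through `u` and `v` are vanishing, then `[u, v] = I ∩ l` is a longest
chord of `I` in its direction. -/
lemma chord_le {I l : Set Pt} {u v : Pt} (huv : u ≠ v)
    (hl : l = {x | ∃ t : ℝ, x = u + t • (v - u)})
    (hside : ∀ H : Set Pt, IsSideOf l H → VanishingSide I l H)
    (hseg : I ∩ l = segment ℝ u v) (hbd : Bornology.IsBounded I)
    {a b : Pt} (ha : a ∈ I) (hb : b ∈ I) {s : ℝ} (hs : b - a = s • (v - u)) : |s| ≤ 1 := by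
  have hd : v - u ≠ 0 := sub_ne_zero.2 huv.symm
  have hul : u ∈ I ∩ l := hseg ▸ left_mem_segment ℝ u v
  have hvl : v ∈ I ∩ l := hseg ▸ right_mem_segment ℝ u v
  have hex : ∃ H, IsSideOf l H ∧ a ∈ H := by
    rcases le_total (det (v - u) a) (det (v - u) u) with h | h
    · refine ⟨_, ⟨det (v - u), det (v - u) u, det_ne_zero hd, ?_, rfl⟩, h⟩
      rw [hl]; ext x; exact mem_line_iff hd x
    · refine ⟨_, ⟨-det (v - u), -det (v - u) u, neg_ne_zero.2 (det_ne_zero hd), ?_, rfl⟩,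
        neg_le_neg h⟩
      rw [hl]; ext x
      simp only [LinearMap.neg_apply, neg_inj]
      exact mem_line_iff hd x
  obtain ⟨H, hH, haH⟩ := hex
  obtain ⟨f, c, hf, hfl, hfH, hmono⟩ := hside H hH
  rw [hfH] at haH
  have haH : f a ≤ c := haH
  have hu : f u = c := by have := hul.2; rw [hfl] at this; exact this
  have hv : f v = c := by have := hvl.2; rw [hfl] at this; exact this
  have hab : f b = f a := by
    have : f (b - a) = 0 := by rw [hs, map_smul, map_sub, hu, hv, sub_self, smul_zero]
    rw [map_sub] at this
    linarith
  have h1 := hmono 0 (c - f a) le_rfl (by linarith) ⟨u, hul.1, by simpa using hu⟩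
    ⟨a, ha, by simp⟩
  -- the section of `I` through `a` and `b` has diameter at most that of `[u, v]`
  have h2 : I ∩ {x | f x = c - 0} = segment ℝ u v := by rw [sub_zero, ← hfl, hseg]
  rw [h2, ← convexHull_pair, convexHull_diam, Metric.diam_pair] at h1
  have h3 : dist a b ≤ dist u v :=
    (Metric.dist_le_diam_of_mem (hbd.subset Set.inter_subset_left) ⟨ha, by simp⟩
      ⟨hb, by simp [hab]⟩).trans h1
  rw [dist_comm a b, dist_comm u v, dist_eq_norm, dist_eq_norm, hs, norm_smul, Real.norm_eq_abs] at h3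
  exact le_of_mul_le_mul_right (by linarith) (norm_pos_iff.2 hd)

open scoped Pointwise in
/-- If `[u, v]` is a longest chord of `I` in its direction, then `I` lies in a strip bounded by parallel
lines through `u` and through `v`: the functional `g` separates `v - u` from `I° - I°`. -/
lemma exists_strip {I : Set Pt} (hI : Convex ℝ I) (hne : (interior I).Nonempty) {u v : Pt}
    (hu : u ∈ I) (hv : v ∈ I)
    (hchord : ∀ a ∈ I, ∀ b ∈ I, ∀ s : ℝ, b - a = s • (v - u) → |s| ≤ 1) :
    ∃ g : Pt →ₗ[ℝ] ℝ, g (v - u) = 1 ∧ ∀ q ∈ I, 0 ≤ g (q - u) ∧ g (q - u) ≤ 1 := by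
  have hopen : IsOpen (interior I - interior I) := isOpen_interior.sub_right
  -- a translate of `[u, v]` inside `I°` could be lengthened inside `I`
  have hd : v - u ∉ interior I - interior I := by
    rintro ⟨a, ha, b, hb, hab⟩
    have hnear : ∀ᶠ s : ℝ in nhds 0, a + s • (v - u) ∈ interior I :=
      (Continuous.tendsto' (by fun_prop) 0 a (by simp)).eventually (isOpen_interior.mem_nhds ha)
    obtain ⟨s, hs, hs0⟩ := ((hnear.filter_mono nhdsWithin_le_nhds).and
      (self_mem_nhdsWithin (s := Set.Ioi (0 : ℝ)))).exists
    have hs0 : 0 < s := hs0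
    have := hchord b (interior_subset hb) _ (interior_subset hs) (1 + s) (by
      have hab : a - b = v - u := hab
      rw [add_smul, one_smul, ← hab]; module)
    rw [abs_of_pos (by linarith)] at this
    linarith
  obtain ⟨f, hf⟩ := geometric_hahn_banach_open_point (hI.interior.sub hI.interior) hopen hd
  have hcl : I ⊆ closure (interior I) := by
    rw [hI.closure_interior_eq_closure_of_nonempty_interior hne]
    exact subset_closure
  have h1 : ∀ a ∈ interior I, ∀ b ∈ interior I, f a ≤ f b + f (v - u) := by
    intro a ha b hb
    have := hf (a - b) ⟨a, ha, b, hb, rfl⟩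
    rw [map_sub] at this
    linarith
  have h2 : ∀ a ∈ I, ∀ b ∈ interior I, f a ≤ f b + f (v - u) := fun a ha b hb =>
    closure_minimal (fun x hx => h1 x hx b hb) (isClosed_le f.continuous continuous_const) (hcl ha)
  have h3 : ∀ a ∈ I, ∀ b ∈ I, f a ≤ f b + f (v - u) := fun a ha b hb =>
    closure_minimal (fun x hx => h2 a ha x hx)
      (isClosed_le continuous_const (f.continuous.add continuous_const)) (hcl hb)
  have hpos : 0 < f (v - u) := by
    obtain ⟨c, hc⟩ := hne
    have := hf (c - c) ⟨c, hc, c, hc, rfl⟩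
    rwa [sub_self, map_zero] at this
  refine ⟨(f (v - u))⁻¹ • (f : Pt →ₗ[ℝ] ℝ), ?_, fun q hq => ?_⟩
  · simp only [LinearMap.smul_apply, ContinuousLinearMap.coe_coe, smul_eq_mul]
    exact inv_mul_cancel₀ hpos.ne'
  · have hq1 := h3 q hq u hu
    have hq2 := h3 v hv q hq
    simp only [LinearMap.smul_apply, ContinuousLinearMap.coe_coe, smul_eq_mul]
    have hqu : f (q - u) = f q - f u := map_sub f q u
    have hvu : f (v - u) = f v - f u := map_sub f v u
    rw [inv_mul_le_one₀ hpos]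
    exact ⟨mul_nonneg (inv_nonneg.2 hpos.le) (by linarith), by linarith⟩

lemma mem_tr {p x : Pt} {C : Set Pt} : x ∈ tr p C ↔ x - p ∈ C := by
  constructor
  · rintro ⟨y, hy, rfl⟩; simpa using hy
  · intro h; exact ⟨x - p, h, by simp⟩

/-- The theorem in the case `u ∈ I'°`. -/
lemma core {C : Set Pt} (hC : IsConvexBody C) {p₁ p₂ : Pt}
    (hI : (interior (tr p₁ C ∩ tr p₂ C)).Nonempty)
    {u v : Pt} {l σ₁ σ₂ : Set Pt} (hsc : SplittingConfig C p₁ p₂ u v l σ₁ σ₂)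
    {p₁' p₂' : Pt} (hu : u ∈ interior (tr p₁' C ∩ tr p₂' C)) :
    PlainlyIntersect (tr p₁ C ∩ tr p₂ C) (tr p₁' C ∩ tr p₂' C) := by
  obtain ⟨huv, huf, hvf, hl, hside, -, hseg, hσ₁, hσ₂, hfr, hint, hs₁, hs₂⟩ := hsc
  have hd : v - u ≠ 0 := sub_ne_zero.2 huv.symm
  have hcpt : ∀ p, IsCompact (tr p C) := fun p => hC.1.image (by fun_prop)
  have hconv : ∀ p, Convex ℝ (tr p C) := fun p => by
    have := hC.2.1.translate p
    exact this
  have hcl : ∀ p, IsClosed (tr p C) := fun p => (hcpt p).isClosed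
  have hIc : IsCompact (tr p₁ C ∩ tr p₂ C) := (hcpt p₁).inter (hcpt p₂)
  have huI := hIc.isClosed.frontier_subset huf
  have hvI := hIc.isClosed.frontier_subset hvf
  obtain ⟨g, hg1, hg⟩ := exists_strip ((hconv p₁).inter (hconv p₂)) hI huI hvI
    (fun a ha b hb s hs => chord_le huv hl hside hseg hIc.isBounded ha hb hs)
  have hinj : Function.Injective (g.prod (det (v - u))) := by
    rw [← LinearMap.ker_eq_bot, LinearMap.ker_eq_bot']
    intro q hq
    obtain ⟨t, rfl⟩ := det_eq_zero hd (congrArg Prod.snd hq)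
    have h1 : g (t • (v - u)) = 0 := congrArg Prod.fst hq
    rw [map_smul, hg1, smul_eq_mul, mul_one] at h1
    rw [h1, zero_smul]
  -- affine coordinates in which `u`, `v` become `(0, 0)`, `(1, 0)` and `I` lies in `0 ≤ x ≤ 1`
  let T : Pt ≃L[ℝ] ℝ × ℝ :=
    (LinearEquiv.ofInjectiveOfFinrankEq (g.prod (det (v - u))) hinj (by simp)).toContinuousLinearEquiv
  have hT : ∀ q, T q = (g q, det (v - u) q) := fun q => rfl
  let Φ : (ℝ × ℝ) ≃ₜ Pt := T.symm.toHomeomorph.trans (Homeomorph.addLeft u)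
  have hΦ : ∀ q, Φ q = u + T.symm q := fun q => rfl
  have hΦ0 : Φ 0 = u := by rw [hΦ, map_zero, add_zero]
  have hΦv : Φ (1, 0) = v := by
    have : T (v - u) = (1, 0) := by
      rw [hT, hg1]
      have : det (v - u) (v - u) = 0 := by rw [det_apply]; ring
      rw [this]
    rw [hΦ, ← this, T.symm_apply_apply]; abel
  have hΦconv : ∀ {S : Set Pt}, Convex ℝ S → Convex ℝ (Φ ⁻¹' S) := by
    intro S hS
    exact (hS.translate_preimage_right u).linear_preimage T.symm.toLinearEquiv.toLinearMap
  have hcfg : Cfg (Φ ⁻¹' tr p₁ C) (Φ ⁻¹' tr p₂ C) (Φ ⁻¹' σ₁) (Φ ⁻¹' σ₂) :=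
    { conv₁ := hΦconv (hconv p₁)
      conv₂ := hΦconv (hconv p₂)
      closed₁ := (hcl p₁).preimage Φ.continuous
      closed₂ := (hcl p₂).preimage Φ.continuous
      cpt := by
        rw [← Set.preimage_inter]; exact Φ.isCompact_preimage.2 hIc
      ne := by
        rw [← Set.preimage_inter, ← Φ.preimage_interior]
        exact hI.preimage Φ.surjective
      strip := by
        intro q hq
        have h1 := hg (Φ q) hq
        have h2 : g (Φ q - u) = q.1 := by
          have : T (Φ q - u) = q := by rw [hΦ, add_sub_cancel_left, T.apply_symm_apply]
          rw [hT] at this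
          exact congrArg Prod.fst this
        rwa [h2] at h1
      front := by
        rw [← Set.preimage_inter, ← Φ.preimage_frontier, hfr, Set.preimage_union]
      pre₁ := Φ.isPreconnected_preimage.2 hσ₁.isPreconnected
      pre₂ := Φ.isPreconnected_preimage.2 hσ₂.isPreconnected
      inter := by
        rw [← Set.preimage_inter, hint]
        ext q
        simp only [Set.mem_preimage, Set.mem_insert_iff, Set.mem_singleton_iff]
        rw [← Φ.injective.eq_iff (a := q) (b := 0), ← Φ.injective.eq_iff (a := q) (b := (1, 0)),
          hΦ0, hΦv]
      sub₁ := by rw [← Φ.preimage_frontier]; exact Set.preimage_mono hs₁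
      sub₂ := by rw [← Φ.preimage_frontier]; exact Set.preimage_mono hs₂ }
  have htr : ∀ p p', Cfg.IsTr (Φ ⁻¹' tr p' C) (Φ ⁻¹' tr p C) := by
    intro p p'
    refine ⟨T (p - p'), ?_⟩
    ext q
    simp only [Set.mem_preimage, mem_tr, hΦ, map_add, T.symm_apply_apply]
    have : u + (T.symm q + (p - p')) - p = u + T.symm q - p' := by abel
    rw [this]
  have h0 : (0 : ℝ × ℝ) ∈ interior (Φ ⁻¹' tr p₁' C) ∩ interior (Φ ⁻¹' tr p₂' C) := by
    rw [← interior_inter, ← Set.preimage_inter, ← Φ.preimage_interior]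
    simpa [hΦ0] using hu
  have hpair : Pair (Φ ⁻¹' tr p₁ C ∩ Φ ⁻¹' tr p₂ C) (Φ ⁻¹' tr p₁' C ∩ Φ ⁻¹' tr p₂' C) :=
    { conv := hcfg.conv
      cpt := hcfg.cpt
      ne := hcfg.ne
      strip := hcfg.strip
      zero_front := hcfg.z_front
      v_front := hcfg.v_front
      conv' := (hΦconv (hconv _)).inter (hΦconv (hconv _))
      cpt' := by
        rw [← Set.preimage_inter]
        exact Φ.isCompact_preimage.2 ((hcpt _).inter (hcpt _))
      zero_int := by rw [interior_inter]; exact h0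
      far_int := by
        intro z hz hzv q hq hf hzi
        rw [interior_inter] at hzi ⊢
        exact ⟨hcfg.key_interior (htr _ _) (htr _ _) hz hzv hq hf h0.1 hzi.1,
          hcfg.key_interior (htr _ _) (htr _ _) hz hzv hq hf h0.2 hzi.2⟩
      far_mem := by
        intro z hz hzv q hq hf hzi
        exact ⟨hcfg.key_closed (htr _ _) (htr _ _) ((hcl _).preimage Φ.continuous)
            (hΦconv (hconv _)) hz hzv hq hf h0.1 hzi.1,
          hcfg.key_closed (htr _ _) (htr _ _) ((hcl _).preimage Φ.continuous)
            (hΦconv (hconv _)) hz hzv hq hf h0.2 hzi.2⟩ }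
  constructor
  · have := hpair.pre_left
    rwa [← Set.preimage_inter, ← Set.preimage_inter, ← Φ.preimage_frontier, ← Set.preimage_inter,
      Φ.isPreconnected_preimage] at this
  · have := hpair.pre_right
    rwa [← Set.preimage_inter, ← Set.preimage_inter, ← Φ.preimage_frontier, ← Set.preimage_inter,
      Φ.isPreconnected_preimage] at this

lemma swap {C : Set Pt} {p₁ p₂ u v : Pt} {l σ₁ σ₂ : Set Pt}
    (h : SplittingConfig C p₁ p₂ u v l σ₁ σ₂) : SplittingConfig C p₁ p₂ v u l σ₁ σ₂ := by
  obtain ⟨huv, huf, hvf, hl, hside, hpar, hseg, hσ₁, hσ₂, hfr, hint, hs₁, hs₂⟩ := h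
  refine ⟨huv.symm, hvf, huf, ?_, hside, ?_, ?_, hσ₁, hσ₂, hfr, ?_, hs₁, hs₂⟩
  · rw [hl]
    ext x
    constructor
    · rintro ⟨t, rfl⟩; exact ⟨1 - t, by module⟩
    · rintro ⟨t, rfl⟩; exact ⟨1 - t, by module⟩
  · rintro ⟨t, ht⟩; exact hpar ⟨-t, by rw [ht]; module⟩
  · rw [hseg, segment_symm]
  · rw [hint, Set.pair_comm]

end Transfer

/-- Let `(u, v, l, σ₁, σ₂)` be a splitting configuration for `(C, p₁, p₂)`
(`p₁ ≠ p₂`, `I = C_{p₁} ∩ C_{p₂}` with nonempty interior) and let `p₁', p₂'` be points such that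
`I' = C_{p₁'} ∩ C_{p₂'}` has nonempty interior.  If `u ∈ I'°` or `v ∈ I'°`, then `I` and `I'`
intersect plainly. -/
theorem stmt18 (C : Set Pt) (hC : IsConvexBody C) (p₁ p₂ : Pt) (hp : p₁ ≠ p₂)
    (hI : (interior (tr p₁ C ∩ tr p₂ C)).Nonempty)
    (u v : Pt) (l σ₁ σ₂ : Set Pt) (hsc : SplittingConfig C p₁ p₂ u v l σ₁ σ₂)
    (p₁' p₂' : Pt) (hI' : (interior (tr p₁' C ∩ tr p₂' C)).Nonempty)
    (huv : u ∈ interior (tr p₁' C ∩ tr p₂' C) ∨ v ∈ interior (tr p₁' C ∩ tr p₂' C)) :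
    PlainlyIntersect (tr p₁ C ∩ tr p₂ C) (tr p₁' C ∩ tr p₂' C) := by
  rcases huv with h | h
  · exact core hC hI hsc h
  · exact core hC hI (swap hsc) h
end
end

section
/- Let C be a convex body in ℝ², let p₁ ≠ p₂ be two points on the x-axis with I = C_{p₁} ∩ C_{p₂} having nonempty interior, and let (u, v, l, σ₁, σ₂) be a splitting configuration for (C, p₁, p₂) in which the y-coordinate of u is greater than the y-coordinate of v. Then for every point p ∈ ℝ² with positive y-coordinate: if v ∈ C_p then u ∈ C_p, and if v lies in the interior of C_p then u lies in the interior of C_p. -/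
/-! Put `w = u - v` and `q = v - p`.  The points `A = v - p₁` and `B = v - p₂` of `C` lie on a common
horizontal line and on the boundary of `C` (because `v ∈ σ₁ ∩ σ₂`), the points `A + w` and `B + w` lie
in `C`, and `q` lies below the line `AB`.  The claim is that `q ∈ C` implies `q + w ∈ C`.

Write `q = A + s (B - A) - r w` with `r > 0`.  If `s < 0`, then `A` is a positive combination of `q`,
`A + w` and `B`, hence interior to `C`, which is impossible (`not_neg_coord`); symmetrically `s > 1` would
put `B` in the interior.  So `0 ≤ s ≤ 1`, and `t = A + w + s (B - A)` is in `C`.  Finally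
`q = t - (1 + r) w`, so `q + w` lies strictly between `t` and `q`; it is in `C`, and in its
interior when `q` is interior. -/

open EuclideanGeometry

noncomputable section

/-- A horizontal nonzero vector and a non-horizontal one span the plane. -/
lemma exists_coords (e w y : Pt) (he : e ≠ 0) (he1 : e 1 = 0) (hw : w 1 ≠ 0) :
    ∃ s : ℝ, y = s • e + (y 1 / w 1) • w := by
  have he0 : e 0 ≠ 0 := by
    intro h
    apply he
    ext i
    fin_cases i <;> simp [h, he1]
  refine ⟨(y 0 - y 1 / w 1 * w 0) / e 0, ?_⟩
  ext i
  fin_cases i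
  · simp
    field_simp
    ring
  · simp [he1]
    field_simp

/-- If `s < 0 < r`, then `A` is a positive combination of the affinely independent points `A + e`,
`A + w` and `A + s e - r w`, so it is interior to any convex set containing them.  This is shown through a
supporting functional at `A`, which would have to vanish identically. -/
lemma not_neg_coord (C : Set Pt) (hC : Convex ℝ C) (hne : (interior C).Nonempty)
    (A e w : Pt) (he : e ≠ 0) (he1 : e 1 = 0) (hw : w 1 ≠ 0) (hA : A ∉ interior C)
    (hB : A + e ∈ C) (hA' : A + w ∈ C) (s r : ℝ) (hr : 0 < r)
    (hq : A + (s • e - r • w) ∈ C) : 0 ≤ s := by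
  by_contra! hs
  obtain ⟨f, hf⟩ := geometric_hahn_banach_open_point hC.interior isOpen_interior hA
  have hle : ∀ x ∈ C, f x ≤ f A := by
    intro x hx
    have h1 : x ∈ closure (interior C) := by
      rw [hC.closure_interior_eq_closure_of_nonempty_interior hne]
      exact subset_closure hx
    exact closure_minimal (fun y hy => (hf y hy).le)
      (isClosed_le f.continuous continuous_const) h1
  have h1 := hle _ hB
  have h2 := hle _ hA'
  have h3 := hle _ hq
  simp only [map_add, map_sub, map_smul, smul_eq_mul] at h1 h2 h3
  have h4 : f e = 0 := by
    by_contra h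
    have : f e < 0 := lt_of_le_of_ne (by linarith) h
    nlinarith [mul_pos_of_neg_of_neg hs this]
  have h5 : f w = 0 := by
    by_contra h
    have : f w < 0 := lt_of_le_of_ne (by linarith) h
    rw [h4] at h3
    nlinarith
  obtain ⟨x, hx⟩ := hne
  obtain ⟨a, ha⟩ := exists_coords e w (x - A) he he1 hw
  have h6 := congrArg f ha
  simp only [map_add, map_sub, map_smul, smul_eq_mul, h4, h5] at h6
  linarith [hf x hx]

lemma interior_tr (p : Pt) (C : Set Pt) : interior (tr p C) = tr p (interior C) :=
  ((Homeomorph.addLeft p).image_interior C).symm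

/-- Let `C` be a convex body, `p₁ ≠ p₂` points on the `x`-axis with
`I = C_{p₁} ∩ C_{p₂}` of nonempty interior, and `(u, v, l, σ₁, σ₂)` a splitting configuration
for `(C, p₁, p₂)` with `u` having larger `y`-coordinate than `v`.  Then for every point `p` with
positive `y`-coordinate: `v ∈ C_p → u ∈ C_p`, and `v ∈ (C_p)° → u ∈ (C_p)°`. -/
theorem stmt19 (C : Set Pt) (hC : IsConvexBody C) (p₁ p₂ : Pt) (hp : p₁ ≠ p₂)
    (hy₁ : p₁ 1 = 0) (hy₂ : p₂ 1 = 0)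
    (hI : (interior (tr p₁ C ∩ tr p₂ C)).Nonempty)
    (u v : Pt) (l σ₁ σ₂ : Set Pt) (hsc : SplittingConfig C p₁ p₂ u v l σ₁ σ₂)
    (huv : v 1 < u 1)
    (p : Pt) (hpy : 0 < p 1) :
    (v ∈ tr p C → u ∈ tr p C) ∧
    (v ∈ interior (tr p C) → u ∈ interior (tr p C)) := by
  obtain ⟨-, -, -, -, -, -, hseg, -, -, -, hσ, hσ₁, hσ₂⟩ := hsc
  have hu : u ∈ tr p₁ C ∩ tr p₂ C := by
    have : u ∈ segment ℝ u v := left_mem_segment ℝ u v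
    rw [← hseg] at this
    exact this.1
  have hv : v ∈ tr p₁ C ∩ tr p₂ C := by
    have : v ∈ segment ℝ u v := right_mem_segment ℝ u v
    rw [← hseg] at this
    exact this.1
  have hvσ : v ∈ σ₁ ∩ σ₂ := by simp [hσ]
  have hA : v - p₁ ∉ interior C := by
    rw [← mem_tr, ← interior_tr]
    exact (hσ₁ hvσ.1).2
  have hB : v - p₂ ∉ interior C := by
    rw [← mem_tr, ← interior_tr]
    exact (hσ₂ hvσ.2).2
  obtain ⟨hu₁, hu₂⟩ := hu
  obtain ⟨hv₁, hv₂⟩ := hv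
  rw [interior_tr]
  simp only [mem_tr] at *
  obtain ⟨-, hconv, hne⟩ := hC
  have hw : (u - v) 1 ≠ 0 := by simpa [sub_eq_zero] using huv.ne'
  have he : p₁ - p₂ ≠ 0 := sub_ne_zero.2 hp
  have he1 : (p₁ - p₂) 1 = 0 := by simp [hy₁, hy₂]
  obtain ⟨s, hs⟩ := exists_coords (p₁ - p₂) (u - v) (p₁ - p) he he1 hw
  obtain ⟨r, hr, hrs⟩ : ∃ r : ℝ, 0 < r ∧ p₁ - p = s • (p₁ - p₂) - r • (u - v) := by
    refine ⟨p 1 / (u 1 - v 1), div_pos hpy (by linarith), ?_⟩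
    rw [hs]
    simp [hy₁, neg_div, sub_eq_add_neg]
    abel
  have key : v - p ∈ C → ∃ t ∈ C, u - p ∈ openSegment ℝ (v - p) t := by
    intro hq
    have hs0 : 0 ≤ s := by
      refine not_neg_coord C hconv hne (v - p₁) (p₁ - p₂) (u - v) he he1 hw hA
        (by convert hv₂ using 1; abel) (by convert hu₁ using 1; abel) s r hr ?_
      rw [← hrs]
      convert hq using 1
      abel
    have hs1 : 0 ≤ 1 - s := by
      refine not_neg_coord C hconv hne (v - p₂) (p₂ - p₁) (u - v) (sub_ne_zero.2 hp.symm)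
        (by simp [hy₁, hy₂]) hw hB
        (by convert hv₁ using 1; abel) (by convert hu₂ using 1; abel) (1 - s) r hr ?_
      have : v - p₂ + ((1 - s) • (p₂ - p₁) - r • (u - v))
          = v - p₁ + (s • (p₁ - p₂) - r • (u - v)) := by module
      rw [this, ← hrs]
      convert hq using 1
      abel
    refine ⟨(1 - s) • (u - p₁) + s • (u - p₂), hconv hu₁ hu₂ hs1 hs0 (by ring), ?_⟩
    refine ⟨r / (1 + r), 1 / (1 + r), by positivity, by positivity, by field_simp; ring, ?_⟩
    have hp' : p = p₁ - (s • (p₁ - p₂) - r • (u - v)) := by rw [← hrs]; abel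
    have hr1 : 1 + r ≠ 0 := by positivity
    rw [hp']
    match_scalars <;> field_simp <;> ring
  refine ⟨fun hq => ?_, fun hq => ?_⟩
  · obtain ⟨t, ht, h⟩ := key hq
    exact hconv.openSegment_subset hq ht h
  · obtain ⟨t, ht, h⟩ := key (interior_subset hq)
    exact hconv.openSegment_interior_self_subset_interior hq ht h
end
end
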